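/- arXiv:2305.09796 — 2 statements merged into one kernel-verified Lean document; each statement's English description precedes it below -/
import Mathlib

section
/- Let (D,V) be a Dyer system. For every subset X ⊆ V, in ℤ[[t]] one has 𝒢_{(B_X,V)}(t) = Σ_{X ⊆ Y ⊆ V} (−1)^{|Y∖X|} · 𝒢_{(D,V)}(t) · 𝒢_{(D_Y,Y)}(t)^{−1}. -/
/-!
Each conjugate `t` of a standard generator is regarded as a wall. The central tool is a cocycle
`n(w, t)` (`DyerGraph.wallVal`), which records as a power of `t` how often `w` crosses the wall
`t`; it satisfies `n(wv, t) = n(v, t) · v⁻¹ n(w, v t v⁻¹) v` and, for a standard generator `s`,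
`n(s^a, s) = s^a` and `n(s^a, t) = 1` if `t ≠ s`. It comes from an action of `D` on `D × D`
(`DyerGraph.crossHom`), and the only real work in building it is checking the Dyer relations.

If `n(g, t) ≠ 1`, some `g t^c` has smaller syllable length (`exists_sylLength_lt`), because a
syllable can be deleted. Hence a `Y`-minimal `a` has `n(a, t) = 1` for all `t ∈ D_Y`. Conversely
every `h ≠ 1` in `D_Y` has `n(h, s) ≠ 1` for some `s ∈ Y` (`exists_wallVal_ne_one`). Together with
the cocycle identity these two facts show that `g ∈ A_Y` iff `n(g, s) = 1` for all `s ∈ Y`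
(`mem_Amin_iff`), and that every element is uniquely `a h` with `a ∈ A_Y`, `h ∈ D_Y`.

If `a ∈ A_Y` and `s` is a generator, then either `s a ∈ A_Y` or `s a = a y` for some `y ∈ Y`
(`letter_mul_mem_Amin`). Reading a geodesic word letter by letter, this gives
`l_V(a h) = l_V(a) + l_Y(h)` (`wordLength_decomp`), so the growth series of `D` is the product of
those of `A_Y` and `D_Y`.

Finally, let `J(g)` be the set of `s` with `n(g, s) = 1`. Then `g ∈ A_Y` iff `Y ⊆ J(g)` and
`g ∈ B_X` iff `X = J(g)`, and the formula is inclusion-exclusion over `X ⊆ Y ⊆ J(g)`, done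
separately for each element `g`.
-/

open scoped Classical

/-- The word length of `g` with respect to the alphabet `S ∪ S⁻¹`. -/
noncomputable def wordLength {G : Type*} [Group G] (S : Set G) (g : G) : ℕ :=
  sInf {n | ∃ w : List G, w.length = n ∧ (∀ a ∈ w, a ∈ S ∪ S⁻¹) ∧ w.prod = g}

/-- The syllable length of `g` with respect to `S`. -/
noncomputable def sylLength {G : Type*} [Group G] (S : Set G) (g : G) : ℕ :=
  sInf {n | ∃ w : List (G × ℤ), w.length = n ∧ (∀ p ∈ w, p.1 ∈ S) ∧
    (w.map fun p => p.1 ^ p.2).prod = g}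

/-- The growth series of a subset `A` of a group `G` with respect to a generating set `S`:
the coefficient of `t^n` is the number of elements of `A` of word length `n`. -/
noncomputable def growthSeries {G : Type*} [Group G] (S : Set G) (A : Set G) :
    PowerSeries ℤ :=
  PowerSeries.mk fun n => (Set.ncard {g ∈ A | wordLength S g = n} : ℤ)

/-- A Dyer graph. -/
structure DyerGraph (V : Type*) where
  Adj : V → V → Prop
  symm : ∀ {x y}, Adj x y → Adj y x
  loopless : ∀ x, ¬ Adj x x
  m : V → V → ℕ
  m_symm : ∀ x y, m x y = m y x
  m_ge : ∀ {x y}, Adj x y → 2 ≤ m x y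
  f : V → ℕ∞
  f_ge : ∀ x, 2 ≤ f x
  compat : ∀ {x y}, Adj x y → m x y ≠ 2 → f x = 2 ∧ f y = 2

namespace DyerGraph

variable {V : Type*} (Γ : DyerGraph V)

/-- The alternating word `π(x, y, n) = xyxy⋯` of length `n` in the free group. -/
def altWord (x y : V) : ℕ → FreeGroup V
  | 0 => 1
  | n + 1 => FreeGroup.of x * altWord y x n

/-- The defining relations of the Dyer group. -/
def rels : Set (FreeGroup V) :=
  {r | ∃ x : V, Γ.f x ≠ ⊤ ∧ r = FreeGroup.of x ^ (Γ.f x).toNat} ∪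
  {r | ∃ x y : V, Γ.Adj x y ∧
      r = altWord x y (Γ.m x y) * (altWord y x (Γ.m x y))⁻¹}

/-- The Dyer group associated to a Dyer graph. -/
abbrev DyerGroup := PresentedGroup Γ.rels

/-- The standard generator of the Dyer group corresponding to a vertex. -/
def gen (x : V) : Γ.DyerGroup := PresentedGroup.of x

/-- The standard parabolic subgroup generated by `X ⊆ V`. -/
def parabolic (X : Set V) : Subgroup Γ.DyerGroup := Subgroup.closure (Γ.gen '' X)

/-- The set of vertices with `f x = 2`. -/
def V2 : Set V := {x | Γ.f x = 2}

/-- The set of vertices with `2 < f x < ∞`. -/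
def Vp : Set V := {x | 2 < Γ.f x ∧ Γ.f x ≠ ⊤}

/-- The set of vertices with `f x = ∞`. -/
def Vinf : Set V := {x | Γ.f x = ⊤}

/-- A Dyer group is of spherical type if the graph is complete and `D_2` is finite. -/
def Spherical : Prop :=
  (∀ x y : V, x ≠ y → Γ.Adj x y) ∧ (Γ.parabolic Γ.V2 : Set Γ.DyerGroup).Finite

/-- The set `A_X` of `X`-minimal elements. -/
def Amin (X : Set V) : Set Γ.DyerGroup :=
  {g | ∀ h ∈ Γ.parabolic X,
    sylLength (Set.range Γ.gen) g ≤ sylLength (Set.range Γ.gen) (g * h)}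

/-- The set `B_X = A_X ∖ ⋃_{X ⊊ Y} A_Y`. -/
def Bmin (X : Set V) : Set Γ.DyerGroup :=
  Γ.Amin X \ ⋃ (Y : Set V) (_ : X ⊂ Y), Γ.Amin Y

end DyerGraph

/-! ### A permutation of `G × G` attached to each element -/

namespace DyerAux

variable {G : Type*} [Group G]

theorem conj_eq_iff {c s : G} (h : Commute c s) (t : G) : c * t * c⁻¹ = s ↔ t = s := by
  rw [mul_inv_eq_iff_eq_mul, ← h.eq, mul_right_inj]

/-- The permutation `(t, u) ↦ s (t, u·s^{[t = s]}) s⁻¹` of `G × G`. The first coordinate is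
the name of a wall (a conjugate of a generator), the second records, as a power of that conjugate,
how often it has been crossed. -/
noncomputable def crossPerm (s : G) : Equiv.Perm (G × G) where
  toFun p := (s * p.1 * s⁻¹, s * (p.2 * if p.1 = s then s else 1) * s⁻¹)
  invFun p := (s⁻¹ * p.1 * s, s⁻¹ * p.2 * s * (if p.1 = s then s else 1)⁻¹)
  left_inv p := by
    obtain ⟨t, u⟩ := p
    simp only [conj_eq_iff (Commute.refl s)]
    ext
    · simp [mul_assoc]
    · split_ifs <;> simp [mul_assoc]
  right_inv p := by
    obtain ⟨t, u⟩ := p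
    have h : s⁻¹ * t * s = s ↔ t = s := by
      simpa using conj_eq_iff (Commute.refl s).inv_left t
    simp only [h]
    ext
    · simp [mul_assoc]
    · split_ifs <;> simp [mul_assoc]

theorem crossPerm_apply (s t u : G) :
    crossPerm s (t, u) = (s * t * s⁻¹, s * (u * if t = s then s else 1) * s⁻¹) := rfl

theorem crossPerm_pow_apply (s : G) (k : ℕ) (t u : G) :
    (crossPerm s ^ k) (t, u) =
      (s ^ k * t * (s ^ k)⁻¹, s ^ k * (u * if t = s then s ^ k else 1) * (s ^ k)⁻¹) := by
  induction k with
  | zero => simp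
  | succ k ih =>
    rw [pow_succ', Equiv.Perm.mul_apply, ih, crossPerm_apply,
      conj_eq_iff ((Commute.refl s).pow_left k)]
    simp only [Prod.mk.injEq]
    split_ifs <;> constructor <;> group

theorem crossPerm_pow_eq_one {s : G} {k : ℕ} (h : s ^ k = 1) : crossPerm s ^ k = 1 := by
  ext1 ⟨t, u⟩
  rw [crossPerm_pow_apply, h]; simp

theorem crossPerm_comm {x y : G} (h : x * y = y * x) :
    crossPerm x * crossPerm y = crossPerm y * crossPerm x := by
  have hc : Commute x y := h
  ext1 ⟨t, u⟩
  simp only [Equiv.Perm.mul_apply, crossPerm_apply, conj_eq_iff hc, conj_eq_iff hc.symm]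
  have ha : Commute x (if t = y then y else 1) := by split_ifs <;> simp [hc]
  have hb : Commute y (if t = x then x else 1) := by split_ifs <;> simp [hc.symm]
  have hab : Commute (if t = y then y else 1) (if t = x then x else 1) := by
    split_ifs <;> simp [hc.symm]
  generalize (if t = y then y else 1) = a at *
  generalize (if t = x then x else 1) = b at *
  simp only [Prod.mk.injEq]
  constructor
  · calc x * (y * t * y⁻¹) * x⁻¹ = (x * y) * t * (x * y)⁻¹ := by group
      _ = _ := by rw [h]; group
  · calc x * (y * (u * a) * y⁻¹ * b) * x⁻¹ = (x * y) * u * a * (y⁻¹ * b) * x⁻¹ := by group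
      _ = (x * y) * u * (a * b) * (x * y)⁻¹ := by rw [hb.inv_left.eq]; group
      _ = (y * x) * u * b * (a * x⁻¹) * y⁻¹ := by rw [h, hab.eq]; group
      _ = _ := by rw [← ha.inv_left.eq]; group

/-- For involutions `x, y`, the exponent counts the `i < 2k` with `t = y(xy)^i`: these are the
reflections met by the alternating word `(xy)^k`. -/
theorem crossPerm_dihedral_pow_apply {x y : G} (hx : x * x = 1) (hy : y * y = 1)
    (k : ℕ) (t u : G) :
    ((crossPerm x * crossPerm y) ^ k) (t, u) =
      ((x * y) ^ k * t * ((x * y) ^ k)⁻¹,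
        (x * y) ^ k * (u * t ^ (∑ i ∈ Finset.range (2 * k), if t = y * (x * y) ^ i then 1 else 0)) *
          ((x * y) ^ k)⁻¹) := by
  have hx' : x⁻¹ = x := inv_eq_of_mul_eq_one_left hx
  have hy' : y⁻¹ = y := inv_eq_of_mul_eq_one_left hy
  -- `y` inverts every power of `xy`
  have hinv : ∀ i : ℕ, y * (x * y) ^ i * y = ((x * y) ^ i)⁻¹ := by
    intro i
    have : y * (x * y) * y⁻¹ = (x * y)⁻¹ := by
      rw [mul_inv_rev, hx', hy']; simp [mul_assoc, hy]
    calc y * (x * y) ^ i * y = (y * (x * y) * y⁻¹) ^ i := by rw [conj_pow, hy']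
      _ = _ := by rw [this, inv_pow]
  have hy2 : ∀ a : G, y * (y * a) = a := fun a => by rw [← mul_assoc, hy, one_mul]
  have hinv' : ∀ i : ℕ, ((x * y) ^ i)⁻¹ * y = y * (x * y) ^ i := by
    intro i; rw [← hinv i]; simp [mul_assoc, hy]
  have hstep : ∀ t u : G, (crossPerm x * crossPerm y) (t, u) =
      ((x * y) * t * (x * y)⁻¹, (x * y) * (u * t ^ ((if t = y then 1 else 0) +
        (if t = y * (x * y) then 1 else 0))) * (x * y)⁻¹) := by
    intro t u
    have e : y * t * y⁻¹ = x ↔ t = y * (x * y) := by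
      constructor
      · rintro rfl; rw [hy']; simp [mul_assoc, hy, hy2]
      · rintro rfl; rw [hy']; simp [mul_assoc, hy, hy2]
    simp only [Equiv.Perm.mul_apply, crossPerm_apply, e, Prod.mk.injEq]
    refine ⟨by group, ?_⟩
    have h1 : (if t = y * (x * y) then x else 1) =
        y * t ^ (if t = y * (x * y) then 1 else 0) * y⁻¹ := by
      split_ifs with h
      · rw [← e] at h; simp [h]
      · simp
    have h2 : (if t = y then y else 1) = t ^ (if t = y then 1 else 0) := by
      split_ifs with h
      · simp [h]
      · simp
    rw [h1, h2, pow_add]; group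
  induction k with
  | zero => simp
  | succ k ih =>
    rw [pow_succ', Equiv.Perm.mul_apply, ih, hstep]
    have e : ∀ z : G, (x * y) ^ k * t * ((x * y) ^ k)⁻¹ = z ↔
        t = ((x * y) ^ k)⁻¹ * z * (x * y) ^ k := by
      intro z
      constructor
      · rintro rfl; group
      · rintro rfl; group
    have e2 : ((x * y) ^ k)⁻¹ * (y * (x * y)) * (x * y) ^ k = y * (x * y) ^ (2 * k + 1) := by
      rw [← mul_assoc, hinv']; generalize x * y = p; group
    have e1 : ((x * y) ^ k)⁻¹ * y * (x * y) ^ k = y * (x * y) ^ (2 * k) := by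
      rw [hinv']; generalize x * y = p; group
    rw [e, e, e1, e2, show 2 * (k + 1) = 2 * k + 1 + 1 by ring, Finset.sum_range_succ,
      Finset.sum_range_succ]
    simp only [Prod.mk.injEq]
    rw [conj_pow, add_assoc, pow_add t (Finset.sum _ _)]
    generalize t ^ (Finset.sum _ _) = q
    generalize t ^ ((if t = y * (x * y) ^ (2 * k) then 1 else 0) +
      (if t = y * (x * y) ^ (2 * k + 1) then 1 else 0)) = r
    generalize x * y = p
    constructor <;> group

/-- If `(xy)^m = 1`, the reflections `y(xy)^i` and `y(xy)^{i+m}` agree, so each wall is met an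
even number of times, and `t² = 1` for each of them. -/
theorem crossPerm_dihedral_pow_eq_one {x y : G} (hx : x * x = 1) (hy : y * y = 1) {m : ℕ}
    (h : (x * y) ^ m = 1) : (crossPerm x * crossPerm y) ^ m = 1 := by
  ext1 ⟨t, u⟩
  rw [crossPerm_dihedral_pow_apply hx hy, h]
  have : t ^ (∑ i ∈ Finset.range (2 * m), if t = y * (x * y) ^ i then 1 else 0) = 1 := by
    rw [two_mul, Finset.sum_range_add]
    simp only [pow_add, h, one_mul]
    rw [← (Commute.refl t).mul_pow]
    by_cases ht : ∃ i, t = y * (x * y) ^ i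
    · obtain ⟨i, hi⟩ := ht
      have : t * t = 1 := by
        have hx' : x⁻¹ = x := inv_eq_of_mul_eq_one_left hx
        have hy' : y⁻¹ = y := inv_eq_of_mul_eq_one_left hy
        have e : y * (x * y) * y⁻¹ = (x * y)⁻¹ := by
          rw [mul_inv_rev, hx', hy']; simp [mul_assoc, hy]
        have e2 : y * (x * y) ^ i * y = ((x * y) ^ i)⁻¹ := by
          calc y * (x * y) ^ i * y = (y * (x * y) * y⁻¹) ^ i := by rw [conj_pow, hy']
            _ = _ := by rw [e, inv_pow]
        rw [hi, ← mul_assoc, e2, inv_mul_cancel]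
      rw [this, one_pow]
    · push Not at ht
      simp [ht]
  rw [this]; simp

/-- For involutions, the relator `π(x,y,n) π(y,x,n)⁻¹` evaluates to `(xy)^n`. -/
theorem lift_altWord {V : Type*} {φ : V → G} {x y : V} (hx : φ x * φ x = 1) (hy : φ y * φ y = 1)
    (n : ℕ) : FreeGroup.lift φ (DyerGraph.altWord x y n * (DyerGraph.altWord y x n)⁻¹) =
      (φ x * φ y) ^ n := by
  induction n generalizing x y with
  | zero => simp [DyerGraph.altWord]
  | succ n ih =>
    have := ih hy hx
    have hy' : (φ y)⁻¹ = φ y := inv_eq_of_mul_eq_one_left hy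
    simp only [map_mul, map_inv] at this
    simp only [DyerGraph.altWord, map_mul, map_inv, FreeGroup.lift_apply_of, mul_inv_rev, hy']
    rw [mul_assoc, ← mul_assoc _ _ (φ y), this]
    clear this ih
    induction n with
    | zero => simp
    | succ n ih =>
      rw [pow_succ (φ x * φ y), ← ih, pow_succ]
      simp [mul_assoc]

end DyerAux

/-! ### The crossing cocycle of a Dyer group -/

namespace DyerGraph

open DyerAux

variable {V : Type*} (Γ : DyerGraph V)

theorem lift_gen_eq_one {r : FreeGroup V} (hr : r ∈ Γ.rels) : FreeGroup.lift Γ.gen r = 1 := by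
  have : FreeGroup.lift Γ.gen = PresentedGroup.mk Γ.rels := by
    ext x; simp [gen, PresentedGroup.of]
  rw [this]
  exact (PresentedGroup.one_of_mem hr)

/-- The permutations `crossPerm (gen x)` satisfy the defining relations of the Dyer group. -/
theorem lift_crossPerm_eq_one (r : FreeGroup V) (hr : r ∈ Γ.rels) :
    FreeGroup.lift (fun x => crossPerm (Γ.gen x)) r = 1 := by
  have h1 := Γ.lift_gen_eq_one hr
  have hsq : ∀ x, Γ.f x = 2 → Γ.gen x * Γ.gen x = 1 := by
    intro x hx
    have := Γ.lift_gen_eq_one (Or.inl ⟨x, by simp [hx], rfl⟩)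
    rw [hx] at this
    simpa [pow_two] using this
  rcases hr with ⟨x, -, rfl⟩ | ⟨x, y, hxy, rfl⟩
  · simp only [map_pow, FreeGroup.lift_apply_of] at h1 ⊢
    exact crossPerm_pow_eq_one h1
  · by_cases hm : Γ.m x y = 2
    · rw [hm] at h1 ⊢
      simp only [altWord, map_mul, map_inv, FreeGroup.lift_apply_of, mul_inv_eq_one,
        mul_one] at h1 ⊢
      exact crossPerm_comm h1
    · obtain ⟨hx, hy⟩ := Γ.compat hxy hm
      rw [lift_altWord (hsq x hx) (hsq y hy)] at h1
      have hc : ∀ x, Γ.f x = 2 → crossPerm (Γ.gen x) * crossPerm (Γ.gen x) = 1 := by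
        intro x hx
        rw [← pow_two]
        exact crossPerm_pow_eq_one (by rw [pow_two, hsq x hx])
      rw [lift_altWord (φ := fun x => crossPerm (Γ.gen x)) (hc x hx) (hc y hy)]
      exact crossPerm_dihedral_pow_eq_one (hsq x hx) (hsq y hy) h1

/-- The action of the Dyer group on pairs (wall, crossing number) in which each generator `x`
acts through `crossPerm (gen x)`. -/
noncomputable def crossHom : Γ.DyerGroup →* Equiv.Perm (Γ.DyerGroup × Γ.DyerGroup) :=
  PresentedGroup.toGroup Γ.lift_crossPerm_eq_one

theorem crossHom_gen (x : V) : Γ.crossHom (Γ.gen x) = crossPerm (Γ.gen x) :=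
  PresentedGroup.toGroup.of _

theorem closure_range_gen : Subgroup.closure (Set.range Γ.gen) = ⊤ :=
  PresentedGroup.closure_range_of _

/-- The crossing cocycle `n(w, t)`. For `w = s₁^{a₁} ⋯ s_k^{a_k}` it is the power of `t` whose
exponent is the sum of the `a_i` over those `i` for which conjugating `s_i` by the tail
`s_{i+1}^{a_{i+1}} ⋯ s_k^{a_k}` gives `t`. -/
noncomputable def wallVal (w t : Γ.DyerGroup) : Γ.DyerGroup :=
  w⁻¹ * (Γ.crossHom w (t, 1)).2 * w

theorem crossHom_apply (w t u : Γ.DyerGroup) :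
    Γ.crossHom w (t, u) = (w * t * w⁻¹, w * (u * Γ.wallVal w t) * w⁻¹) := by
  suffices h : ∃ n : Γ.DyerGroup → Γ.DyerGroup, ∀ t u,
      Γ.crossHom w (t, u) = (w * t * w⁻¹, w * (u * n t) * w⁻¹) by
    obtain ⟨n, hn⟩ := h
    rw [wallVal, hn, hn]
    simp [mul_assoc]
  have hw : w ∈ Subgroup.closure (Set.range Γ.gen) := by rw [closure_range_gen]; trivial
  induction hw using Subgroup.closure_induction with
  | mem x hx =>
    obtain ⟨v, rfl⟩ := hx
    exact ⟨_, fun t u => by rw [crossHom_gen, crossPerm_apply]⟩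
  | one => exact ⟨fun _ => 1, by simp⟩
  | mul x y _ _ hx hy =>
    obtain ⟨n, hn⟩ := hx
    obtain ⟨k, hk⟩ := hy
    refine ⟨fun t => k t * (y⁻¹ * n (y * t * y⁻¹) * y), fun t u => ?_⟩
    rw [map_mul, Equiv.Perm.mul_apply, hk, hn]
    ext <;> simp [mul_assoc]
  | inv x _ hx =>
    obtain ⟨n, hn⟩ := hx
    refine ⟨fun t => x * (n (x⁻¹ * t * x))⁻¹ * x⁻¹, fun t u => ?_⟩
    rw [map_inv, Equiv.Perm.inv_eq_iff_eq, hn]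
    ext <;> simp [mul_assoc]

/-- The cocycle identity `n(wv, t) = n(v, t) · v⁻¹ n(w, v t v⁻¹) v`. -/
theorem wallVal_mul (w v t : Γ.DyerGroup) :
    Γ.wallVal (w * v) t = Γ.wallVal v t * (v⁻¹ * Γ.wallVal w (v * t * v⁻¹) * v) := by
  rw [wallVal, map_mul, Equiv.Perm.mul_apply, crossHom_apply, crossHom_apply]
  simp [mul_assoc]

theorem wallVal_one (t : Γ.DyerGroup) : Γ.wallVal 1 t = 1 := by simp [wallVal]

theorem wallVal_gen (x : V) (t : Γ.DyerGroup) :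
    Γ.wallVal (Γ.gen x) t = if t = Γ.gen x then Γ.gen x else 1 := by
  rw [wallVal, crossHom_gen, crossPerm_apply]; simp [mul_assoc]

theorem wallVal_gen_pow {s : Γ.DyerGroup} (hs : s ∈ Set.range Γ.gen) (a : ℕ) (t : Γ.DyerGroup) :
    Γ.wallVal (s ^ a) t = if t = s then s ^ a else 1 := by
  obtain ⟨x, rfl⟩ := hs
  rw [wallVal, map_pow, crossHom_gen, crossPerm_pow_apply]; simp [mul_assoc]

theorem wallVal_gen_zpow {s : Γ.DyerGroup} (hs : s ∈ Set.range Γ.gen) (a : ℤ)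
    (t : Γ.DyerGroup) : Γ.wallVal (s ^ a) t = if t = s then s ^ a else 1 := by
  obtain ⟨k, rfl | rfl⟩ := a.eq_nat_or_neg
  · simpa using Γ.wallVal_gen_pow hs k t
  · have h := Γ.wallVal_mul (s ^ k) (s ^ (-(k : ℤ))) t
    have e : s ^ k * s ^ (-(k : ℤ)) = 1 := by simp
    rw [e, wallVal_one, Γ.wallVal_gen_pow hs] at h
    rw [conj_eq_iff ((Commute.refl s).zpow_left _)] at h
    rw [eq_mul_inv_of_mul_eq h.symm]
    split_ifs <;> simp

end DyerGraph

/-! ### Word length and syllable length -/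

namespace DyerAux

variable {G : Type*} [Group G]

theorem sylLength_le {S : Set G} {w : List (G × ℤ)} (hw : ∀ p ∈ w, p.1 ∈ S) :
    sylLength S (w.map fun p => p.1 ^ p.2).prod ≤ w.length :=
  Nat.sInf_le ⟨w, rfl, hw, rfl⟩

theorem exists_word {S : Set G} {g : G} (hg : g ∈ Subgroup.closure S) :
    ∃ w : List G, (∀ a ∈ w, a ∈ S ∪ S⁻¹) ∧ w.prod = g :=
  Submonoid.exists_list_of_mem_closure (by
    rw [← Subgroup.closure_toSubmonoid]; exact hg)

theorem exists_word_length_eq {S : Set G} {g : G} (hg : g ∈ Subgroup.closure S) :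
    ∃ w : List G, w.length = wordLength S g ∧ (∀ a ∈ w, a ∈ S ∪ S⁻¹) ∧ w.prod = g := by
  obtain ⟨w, hw⟩ := exists_word hg
  exact Nat.sInf_mem
    (s := {n | ∃ w : List G, w.length = n ∧ (∀ a ∈ w, a ∈ S ∪ S⁻¹) ∧ w.prod = g}) ⟨_, w, rfl, hw⟩

theorem wordLength_le {S : Set G} {w : List G} (hw : ∀ a ∈ w, a ∈ S ∪ S⁻¹) :
    wordLength S w.prod ≤ w.length :=
  Nat.sInf_le ⟨w, rfl, hw, rfl⟩

theorem wordLength_one (S : Set G) : wordLength S (1 : G) = 0 :=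
  Nat.le_zero.1 (by simpa using wordLength_le (S := S) (w := []) (by simp))

theorem exists_sylWord_length_eq {S : Set G} {g : G} (hg : g ∈ Subgroup.closure S) :
    ∃ w : List (G × ℤ), w.length = sylLength S g ∧ (∀ p ∈ w, p.1 ∈ S) ∧
      (w.map fun p => p.1 ^ p.2).prod = g := by
  have : ∃ w : List (G × ℤ), (∀ p ∈ w, p.1 ∈ S) ∧ (w.map fun p => p.1 ^ p.2).prod = g := by
    induction hg using Subgroup.closure_induction'' with
    | mem x hx => exact ⟨[(x, 1)], by simpa using hx, by simp⟩
    | inv_mem x hx => exact ⟨[(x, -1)], by simpa using hx, by simp⟩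
    | one => exact ⟨[], by simp, by simp⟩
    | mul x y _ _ hx hy =>
      obtain ⟨w, hw, rfl⟩ := hx
      obtain ⟨v, hv, rfl⟩ := hy
      refine ⟨w ++ v, ?_, by simp⟩
      intro p hp
      rcases List.mem_append.1 hp with h | h
      exacts [hw p h, hv p h]
  obtain ⟨w, hw⟩ := this
  exact Nat.sInf_mem
    (s := {n | ∃ w : List (G × ℤ), w.length = n ∧ (∀ p ∈ w, p.1 ∈ S) ∧
      (w.map fun p => p.1 ^ p.2).prod = g}) ⟨_, w, rfl, hw⟩

theorem wordLength_mul_le {S : Set G} {g h : G} (hg : g ∈ Subgroup.closure S)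
    (hh : h ∈ Subgroup.closure S) :
    wordLength S (g * h) ≤ wordLength S g + wordLength S h := by
  obtain ⟨w, hwl, hw, rfl⟩ := exists_word_length_eq hg
  obtain ⟨v, hvl, hv, rfl⟩ := exists_word_length_eq hh
  rw [← hwl, ← hvl, ← List.prod_append, ← List.length_append]
  refine wordLength_le fun a ha => ?_
  rcases List.mem_append.1 ha with h | h
  exacts [hw a h, hv a h]

theorem wordLength_letter_mul_le {S : Set G} {s g : G} (hs : s ∈ S ∪ S⁻¹)
    (hg : g ∈ Subgroup.closure S) : wordLength S (s * g) ≤ wordLength S g + 1 := by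
  obtain ⟨w, hwl, hw, rfl⟩ := exists_word_length_eq hg
  rw [← hwl, ← List.prod_cons, ← List.length_cons (a := s)]
  exact wordLength_le (by simpa using ⟨hs, hw⟩)

theorem wordLength_anti {S T : Set G} (h : S ⊆ T) {g : G} (hg : g ∈ Subgroup.closure S) :
    wordLength T g ≤ wordLength S g := by
  obtain ⟨w, hwl, hw, rfl⟩ := exists_word_length_eq hg
  rw [← hwl]
  exact wordLength_le fun a ha => Set.union_subset_union h (Set.inv_subset_inv.2 h) (hw a ha)

/-- Restricting to the subgroup generated by `S` matters: `wordLength S` takes the junk value `0`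
outside of it. -/
theorem finite_sphere {S : Set G} (hS : S.Finite) (n : ℕ) {A : Set G}
    (hA : A ⊆ Subgroup.closure S) : {g ∈ A | wordLength S g = n}.Finite := by
  have : Finite ↥(S ∪ S⁻¹) := (hS.union hS.inv).to_subtype
  refine ((List.finite_length_eq ↥(S ∪ S⁻¹) n).image
    fun l => (l.map Subtype.val).prod).subset ?_
  rintro g ⟨hg, rfl⟩
  obtain ⟨w, hwl, hw, hp⟩ := exists_word_length_eq (hA hg)
  lift w to List ↥(S ∪ S⁻¹) using hw
  exact ⟨w, by simpa using hwl, hp⟩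

end DyerAux

/-! ### Minimal coset representatives -/

namespace DyerGraph

open DyerAux

variable {V : Type*} (Γ : DyerGraph V)

theorem mem_closure_range_gen (g : Γ.DyerGroup) : g ∈ Subgroup.closure (Set.range Γ.gen) := by
  rw [closure_range_gen]; trivial

/-- If `t` is crossed by a syllable word, multiplying on the right by a power of `t` deletes one
of its syllables. -/
theorem exists_deletion {S : Set Γ.DyerGroup} (hS : S ⊆ Set.range Γ.gen)
    (w : List (Γ.DyerGroup × ℤ)) (hw : ∀ p ∈ w, p.1 ∈ S) (t : Γ.DyerGroup)
    (ht : Γ.wallVal (w.map fun p => p.1 ^ p.2).prod t ≠ 1) :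
    ∃ (c : ℤ) (v : List (Γ.DyerGroup × ℤ)), v.length < w.length ∧ (∀ p ∈ v, p.1 ∈ S) ∧
      (v.map fun p => p.1 ^ p.2).prod = (w.map fun p => p.1 ^ p.2).prod * t ^ c := by
  induction w using List.reverseRecOn generalizing t with
  | nil => simp [wallVal_one] at ht
  | append_singleton w p ih =>
    obtain ⟨s, a⟩ := p
    have hs : s ∈ S := hw (s, a) (by simp)
    have hw' : ∀ p ∈ w, p.1 ∈ S := fun p hp => hw p (by simp [hp])
    simp only [List.map_append, List.map_cons, List.map_nil, List.prod_append, List.prod_singleton]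
      at ht ⊢
    by_cases hts : t = s
    · exact ⟨-a, w, by simp, hw', by simp [hts]⟩
    · rw [wallVal_mul, Γ.wallVal_gen_zpow (hS hs), if_neg hts, one_mul] at ht
      obtain ⟨c, v, hvl, hv, hvp⟩ := ih hw' (s ^ a * t * (s ^ a)⁻¹) (by
        intro h
        rw [h] at ht
        simp at ht)
      refine ⟨c, v ++ [(s, a)], by simpa using hvl, ?_, ?_⟩
      · intro p hp
        rcases List.mem_append.1 hp with h | h
        · exact hv p h
        · rw [List.mem_singleton.1 h]; exact hs
      · simp only [List.map_append, List.map_cons, List.map_nil, List.prod_append,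
          List.prod_singleton, hvp, conj_zpow]
        group

theorem exists_sylLength_lt {g t : Γ.DyerGroup} (h : Γ.wallVal g t ≠ 1) :
    ∃ c : ℤ, sylLength (Set.range Γ.gen) (g * t ^ c) < sylLength (Set.range Γ.gen) g := by
  obtain ⟨w, hwl, hw, rfl⟩ := exists_sylWord_length_eq (Γ.mem_closure_range_gen g)
  obtain ⟨c, v, hvl, hv, hvp⟩ := Γ.exists_deletion subset_rfl w hw t h
  refine ⟨c, ?_⟩
  rw [← hwl, ← hvp]
  exact (sylLength_le hv).trans_lt hvl

/-- A nontrivial element of the subgroup generated by a set `S` of standard generators crosses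
the wall of some `s ∈ S`, namely the last letter of a shortest syllable word in `S`. -/
theorem exists_wallVal_ne_one {S : Set Γ.DyerGroup} (hS : S ⊆ Set.range Γ.gen)
    {h : Γ.DyerGroup} (hh : h ∈ Subgroup.closure S) (h1 : h ≠ 1) :
    ∃ s ∈ S, Γ.wallVal h s ≠ 1 := by
  obtain ⟨w, hwl, hw, hp⟩ := exists_sylWord_length_eq hh
  rcases List.eq_nil_or_concat' w with rfl | ⟨w, ⟨s, a⟩, rfl⟩
  · simp at hp; exact absurd hp.symm h1
  have hs : s ∈ S := hw (s, a) (by simp)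
  have hw' : ∀ p ∈ w, p.1 ∈ S := fun p hp => hw p (by simp [hp])
  simp only [List.map_append, List.map_cons, List.map_nil, List.prod_append, List.prod_singleton,
    List.length_append, List.length_singleton] at hp hwl
  -- otherwise the wall `s` could be crossed by a single syllable, shortening the word
  have hws : Γ.wallVal (w.map fun p => p.1 ^ p.2).prod s = 1 := by
    by_contra hne
    obtain ⟨c, v, hvl, hv, hvp⟩ := Γ.exists_deletion hS w hw' s hne
    have : sylLength S h ≤ (v ++ [(s, a - c)]).length := by
      have e : h = ((v ++ [(s, a - c)]).map fun p => p.1 ^ p.2).prod := by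
        rw [← hp]
        simp only [List.map_append, List.map_cons, List.map_nil, List.prod_append,
          List.prod_singleton, hvp]
        rw [mul_assoc, ← zpow_add]; simp
      rw [e]
      refine sylLength_le fun p hp => ?_
      rcases List.mem_append.1 hp with h | h
      · exact hv p h
      · rw [List.mem_singleton.1 h]; exact hs
    simp at this
    omega
  refine ⟨s, hs, ?_⟩
  have e : s ^ a * s * (s ^ a)⁻¹ = s :=
    (conj_eq_iff ((Commute.refl s).zpow_left a) s).2 rfl
  rw [← hp, wallVal_mul, e, hws, Γ.wallVal_gen_zpow (hS hs), if_pos rfl]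
  intro hsa
  simp only [mul_one, inv_mul_cancel] at hsa
  rw [hsa, mul_one] at hp
  have := sylLength_le hw'
  rw [hp] at this
  omega

theorem wallVal_eq_one_of_mem_Amin {Y : Set V} {g : Γ.DyerGroup} (hg : g ∈ Γ.Amin Y)
    {t : Γ.DyerGroup} (ht : t ∈ Γ.parabolic Y) : Γ.wallVal g t = 1 := by
  by_contra h
  obtain ⟨c, hc⟩ := Γ.exists_sylLength_lt h
  exact absurd (hg _ (zpow_mem ht c)) (not_le.2 hc)

theorem gen_mem_parabolic {Y : Set V} {y : V} (hy : y ∈ Y) : Γ.gen y ∈ Γ.parabolic Y :=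
  Subgroup.subset_closure ⟨y, hy, rfl⟩

theorem wallVal_mul_of_mem_Amin {Y : Set V} {a h : Γ.DyerGroup} (ha : a ∈ Γ.Amin Y)
    (hh : h ∈ Γ.parabolic Y) {t : Γ.DyerGroup} (ht : t ∈ Γ.parabolic Y) :
    Γ.wallVal (a * h) t = Γ.wallVal h t := by
  rw [wallVal_mul, Γ.wallVal_eq_one_of_mem_Amin ha (mul_mem (mul_mem hh ht) (inv_mem hh))]
  simp

/-- Every element is a `Y`-minimal element times an element of `D_Y`: take a shortest element of
the coset `g D_Y`. -/
theorem exists_decomp (Y : Set V) (g : Γ.DyerGroup) :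
    ∃ a ∈ Γ.Amin Y, ∃ h ∈ Γ.parabolic Y, a * h = g := by
  obtain ⟨⟨k, hk⟩, hmin⟩ := WellFounded.has_min
    (InvImage.wf (fun k : Γ.parabolic Y => sylLength (Set.range Γ.gen) (g * k)) (wellFounded_lt (α := ℕ)))
    Set.univ ⟨1, trivial⟩
  refine ⟨g * k, fun h hh => ?_, k⁻¹, inv_mem hk, by simp⟩
  have := hmin.2 ⟨k * h, mul_mem hk hh⟩ trivial
  simpa [InvImage, mul_assoc] using this

theorem eq_one_of_wallVal {Y : Set V} {a h : Γ.DyerGroup} (ha : a ∈ Γ.Amin Y)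
    (hh : h ∈ Γ.parabolic Y) (hah : ∀ y ∈ Y, Γ.wallVal (a * h) (Γ.gen y) = 1) : h = 1 := by
  by_contra h1
  obtain ⟨_, ⟨y, hy, rfl⟩, hne⟩ := Γ.exists_wallVal_ne_one (Set.image_subset_range _ _) hh h1
  exact hne (by rw [← Γ.wallVal_mul_of_mem_Amin ha hh (Γ.gen_mem_parabolic hy), hah y hy])

/-- `Y`-minimality can be tested on the individual generators in `Y`. -/
theorem mem_Amin_iff {Y : Set V} {g : Γ.DyerGroup} :
    g ∈ Γ.Amin Y ↔ ∀ y ∈ Y, Γ.wallVal g (Γ.gen y) = 1 := by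
  constructor
  · exact fun hg y hy => Γ.wallVal_eq_one_of_mem_Amin hg (Γ.gen_mem_parabolic hy)
  · intro hg
    obtain ⟨a, ha, h, hh, rfl⟩ := Γ.exists_decomp Y g
    rw [Γ.eq_one_of_wallVal ha hh hg, mul_one]
    exact ha

theorem decomp_unique {Y : Set V} {a a' h h' : Γ.DyerGroup} (ha : a ∈ Γ.Amin Y)
    (ha' : a' ∈ Γ.Amin Y) (hh : h ∈ Γ.parabolic Y) (hh' : h' ∈ Γ.parabolic Y)
    (e : a * h = a' * h') : a = a' ∧ h = h' := by
  have hk : h * h'⁻¹ = 1 := by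
    refine Γ.eq_one_of_wallVal ha (mul_mem hh (inv_mem hh')) ?_
    rw [← mul_assoc, e, mul_inv_cancel_right]
    exact Γ.mem_Amin_iff.1 ha'
  have : h = h' := mul_inv_eq_one.1 hk
  subst this
  exact ⟨mul_right_cancel e, rfl⟩

/-- Multiplying a `Y`-minimal element on the left by a power of a generator either keeps it
`Y`-minimal, or amounts to multiplying it on the right by the same power of a generator in `Y`. -/
theorem letter_mul_mem_Amin {Y : Set V} {a : Γ.DyerGroup} (ha : a ∈ Γ.Amin Y) (x : V) (c : ℤ) :
    Γ.gen x ^ c * a ∈ Γ.Amin Y ∨ ∃ y ∈ Y, Γ.gen x ^ c * a = a * Γ.gen y ^ c := by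
  by_cases hxa : Γ.gen x ^ c * a ∈ Γ.Amin Y
  · exact Or.inl hxa
  · right
    rw [mem_Amin_iff] at hxa ha
    push Not at hxa
    obtain ⟨y, hy, hne⟩ := hxa
    refine ⟨y, hy, ?_⟩
    rw [wallVal_mul, ha y hy, one_mul, Γ.wallVal_gen_zpow ⟨x, rfl⟩] at hne
    have e : a * Γ.gen y * a⁻¹ = Γ.gen x := by
      by_contra h
      simp [h] at hne
    rw [← e, conj_zpow]; simp

/-- Reading a word from right to left and applying `letter_mul_mem_Amin` to each letter, every
letter lengthens exactly one of the two factors by at most one. -/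
theorem exists_decomp_word (Y : Set V) (w : List Γ.DyerGroup)
    (hw : ∀ b ∈ w, b ∈ Set.range Γ.gen ∪ (Set.range Γ.gen)⁻¹) :
    ∃ a ∈ Γ.Amin Y, ∃ h ∈ Γ.parabolic Y, a * h = w.prod ∧
      wordLength (Set.range Γ.gen) a + wordLength (Γ.gen '' Y) h ≤ w.length := by
  induction w with
  | nil =>
    exact ⟨1, Γ.mem_Amin_iff.2 fun y _ => Γ.wallVal_one _, 1, one_mem _, by simp,
      by simp [wordLength_one]⟩
  | cons b w ih =>
    obtain ⟨a, ha, h, hh, hp, hl⟩ := ih fun b hb => hw b (by simp [hb])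
    have hb := hw b (by simp)
    have : ∃ (x : V) (c : ℤ), b = Γ.gen x ^ c ∧ (c = 1 ∨ c = -1) := by
      rcases hb with ⟨x, rfl⟩ | ⟨x, hx⟩
      · exact ⟨x, 1, by simp, Or.inl rfl⟩
      · exact ⟨x, -1, by simp [hx], Or.inr rfl⟩
    obtain ⟨x, c, hbx, hc⟩ := this
    rcases Γ.letter_mul_mem_Amin ha x c with hxa | ⟨y, hy, hxa⟩
    · refine ⟨b * a, hbx ▸ hxa, h, hh, by simp [← hp, mul_assoc], ?_⟩
      have := wordLength_letter_mul_le hb (Γ.mem_closure_range_gen a)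
      rw [List.length_cons]; omega
    · refine ⟨a, ha, Γ.gen y ^ c * h, mul_mem (zpow_mem (Γ.gen_mem_parabolic hy) c) hh, ?_, ?_⟩
      · rw [← mul_assoc, ← hxa, ← hbx, List.prod_cons, ← hp, mul_assoc]
      · have : wordLength (Γ.gen '' Y) (Γ.gen y ^ c * h) ≤ wordLength (Γ.gen '' Y) h + 1 := by
          refine wordLength_letter_mul_le ?_ hh
          rcases hc with rfl | rfl
          · exact Or.inl ⟨y, hy, by simp⟩
          · exact Or.inr ⟨y, hy, by simp⟩
        rw [List.length_cons]; omega

/-- Word length is additive along the decomposition `D = A_Y · D_Y`; the second factor is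
measured with the generators in `Y` only. -/
theorem wordLength_decomp {Y : Set V} {a h : Γ.DyerGroup} (ha : a ∈ Γ.Amin Y)
    (hh : h ∈ Γ.parabolic Y) : wordLength (Set.range Γ.gen) (a * h) =
      wordLength (Set.range Γ.gen) a + wordLength (Γ.gen '' Y) h := by
  apply le_antisymm
  · refine (wordLength_mul_le (Γ.mem_closure_range_gen a) (Γ.mem_closure_range_gen h)).trans ?_
    exact Nat.add_le_add_left (wordLength_anti (Set.image_subset_range _ _) hh) _
  · obtain ⟨w, hwl, hw, hp⟩ := exists_word_length_eq (Γ.mem_closure_range_gen (a * h))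
    obtain ⟨a', ha', h', hh', hp', hl⟩ := Γ.exists_decomp_word Y w hw
    obtain ⟨rfl, rfl⟩ := Γ.decomp_unique ha ha' hh hh' (hp.symm.trans hp'.symm)
    omega

theorem mem_Bmin_iff {X : Set V} {g : Γ.DyerGroup} :
    g ∈ Γ.Bmin X ↔ X = {y | Γ.wallVal g (Γ.gen y) = 1} := by
  simp only [Bmin, Set.mem_sdiff, Set.mem_iUnion, mem_Amin_iff, not_exists]
  constructor
  · rintro ⟨h1, h2⟩
    by_contra hne
    exact h2 {y | Γ.wallVal g (Γ.gen y) = 1} (Set.ssubset_iff_subset_ne.2 ⟨h1, hne⟩) fun y hy => hy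
  · rintro rfl
    exact ⟨fun y hy => hy, fun Y hY h => hY.2 h⟩

end DyerGraph

/-! ### Growth series -/

namespace DyerGraph

open DyerAux

variable {V : Type*} [Fintype V] (Γ : DyerGraph V)

theorem growthSeries_univ_eq (Y : Set V) :
    growthSeries (Set.range Γ.gen) (Set.univ : Set Γ.DyerGroup) =
      growthSeries (Set.range Γ.gen) (Γ.Amin Y) *
        growthSeries (Γ.gen '' Y) (Γ.parabolic Y : Set Γ.DyerGroup) := by
  have hfin : ∀ (A : Set Γ.DyerGroup) n,
      {g ∈ A | wordLength (Set.range Γ.gen) g = n}.Finite := fun A n =>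
    finite_sphere (Set.finite_range _) n fun g _ => Γ.mem_closure_range_gen g
  have hfinY : ∀ n, {g ∈ (Γ.parabolic Y : Set Γ.DyerGroup) |
      wordLength (Γ.gen '' Y) g = n}.Finite := fun n =>
    finite_sphere (Set.toFinite _) n fun g hg => hg
  ext n
  rw [PowerSeries.coeff_mul]
  simp only [growthSeries, PowerSeries.coeff_mk]
  rw [Set.ncard_eq_toFinset_card _ (hfin _ n)]
  simp only [fun i => Set.ncard_eq_toFinset_card _ (hfin (Γ.Amin Y) i),
    fun i => Set.ncard_eq_toFinset_card _ (hfinY i)]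
  simp only [← Nat.cast_mul, ← Nat.cast_sum, ← Finset.card_product]
  rw [← Finset.card_sigma, Nat.cast_inj]
  symm
  refine Finset.card_bij (fun p _ => p.2.1 * p.2.2) ?_ ?_ ?_
  · rintro ⟨⟨i, j⟩, a, h⟩ hp
    simp only [Finset.mem_sigma, Finset.HasAntidiagonal.mem_antidiagonal, Finset.mem_product,
      Set.Finite.mem_toFinset, Set.mem_ofPred_eq] at hp ⊢
    obtain ⟨hij, ⟨ha, hi⟩, hh, hj⟩ := hp
    exact ⟨trivial, by rw [Γ.wordLength_decomp ha hh, hi, hj, hij]⟩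
  · rintro ⟨⟨i, j⟩, a, h⟩ hp ⟨⟨i', j'⟩, a', h'⟩ hp' e
    simp only [Finset.mem_sigma, Finset.HasAntidiagonal.mem_antidiagonal, Finset.mem_product,
      Set.Finite.mem_toFinset, Set.mem_ofPred_eq] at hp hp' e
    obtain ⟨-, ⟨ha, rfl⟩, hh, rfl⟩ := hp
    obtain ⟨-, ⟨ha', rfl⟩, hh', rfl⟩ := hp'
    obtain ⟨rfl, rfl⟩ := Γ.decomp_unique ha ha' hh hh' e
    rfl
  · intro g hg
    obtain ⟨a, ha, h, hh, rfl⟩ := Γ.exists_decomp Y g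
    refine ⟨⟨(wordLength (Set.range Γ.gen) a, wordLength (Γ.gen '' Y) h), a, h⟩, ?_, rfl⟩
    simp only [Set.Finite.mem_toFinset, Set.mem_ofPred_eq] at hg
    simp only [Finset.mem_sigma, Finset.HasAntidiagonal.mem_antidiagonal, Finset.mem_product,
      Set.Finite.mem_toFinset, Set.mem_ofPred_eq]
    exact ⟨by rw [← Γ.wordLength_decomp ha hh, hg.2], ⟨ha, trivial⟩, hh, trivial⟩

theorem isUnit_growthSeries_parabolic {V : Type*} (Γ : DyerGraph V) (Y : Set V) :
    IsUnit (growthSeries (Γ.gen '' Y) (Γ.parabolic Y : Set Γ.DyerGroup)) := by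
  have hset : {g ∈ (Γ.parabolic Y : Set Γ.DyerGroup) | wordLength (Γ.gen '' Y) g = 0} = {1} := by
    ext g
    simp only [Set.mem_ofPred_eq, Set.mem_singleton_iff]
    constructor
    · rintro ⟨hg, h0⟩
      obtain ⟨w, hwl, -, rfl⟩ := exists_word_length_eq hg
      rw [h0] at hwl
      simp [List.length_eq_zero_iff.1 hwl]
    · rintro rfl
      exact ⟨one_mem _, wordLength_one _⟩
  rw [PowerSeries.isUnit_iff_constantCoeff, ← PowerSeries.coeff_zero_eq_constantCoeff_apply,
    growthSeries, PowerSeries.coeff_mk, hset]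
  simp

theorem growthSeries_Amin (Y : Set V) :
    growthSeries (Set.range Γ.gen) (Set.univ : Set Γ.DyerGroup) *
      Ring.inverse (growthSeries (Γ.gen '' Y) (Γ.parabolic Y : Set Γ.DyerGroup)) =
    growthSeries (Set.range Γ.gen) (Γ.Amin Y) := by
  rw [Γ.growthSeries_univ_eq Y,
    Ring.mul_inverse_cancel_right _ _ (Γ.isUnit_growthSeries_parabolic Y)]

end DyerGraph

theorem DyerAux.sum_Icc_neg_one_pow {V : Type*} [DecidableEq V] (X J : Finset V) :
    ∑ Y ∈ Finset.Icc X J, (-1 : ℤ) ^ (Y \ X).card = if X = J then 1 else 0 := by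
  by_cases hXJ : X ⊆ J
  · rw [Finset.Icc_eq_image_powerset hXJ, Finset.sum_image]
    · have : ∀ Z ∈ (J \ X).powerset, (-1 : ℤ) ^ ((X ∪ Z) \ X).card = (-1) ^ Z.card := by
        intro Z hZ
        have hd : Disjoint Z X :=
          Finset.disjoint_of_subset_left (Finset.mem_powerset.1 hZ) Finset.sdiff_disjoint
        rw [Finset.union_sdiff_cancel_left hd.symm]
      rw [Finset.sum_congr rfl this, Finset.sum_powerset_neg_one_pow_card]
      simp only [Finset.sdiff_eq_empty_iff_subset]
      congr 1
      exact propext ⟨fun h => hXJ.antisymm h, fun h => h ▸ subset_rfl⟩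
    · intro Z hZ Z' hZ' e
      have hd : ∀ Z ∈ (J \ X).powerset, (X ∪ Z) \ X = Z := fun Z hZ =>
        Finset.union_sdiff_cancel_left (Finset.disjoint_of_subset_left
          (Finset.mem_powerset.1 hZ) Finset.sdiff_disjoint).symm
      rw [← hd Z hZ, ← hd Z' hZ']
      exact congrArg (· \ X) e
  · rw [Finset.Icc_eq_empty hXJ, if_neg (fun h : X = J => hXJ h.subset)]
    simp

/-- For every `X ⊆ V`,
`𝒢_{(B_X,V)} = ∑_{X ⊆ Y ⊆ V} (−1)^{|Y∖X|} 𝒢_{(D,V)} ⬝ 𝒢_{(D_Y,Y)}⁻¹`. -/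
theorem growthSeries_Bmin_eq
    {V : Type} [Fintype V] (Γ : DyerGraph V) (X : Finset V) :
    growthSeries (Set.range Γ.gen) (Γ.Bmin (↑X : Set V)) =
      ∑ Y ∈ (Finset.univ : Finset V).powerset.filter (fun Y => X ⊆ Y),
        (-1 : PowerSeries ℤ) ^ (Y \ X).card *
          (growthSeries (Set.range Γ.gen) (Set.univ : Set Γ.DyerGroup) *
            Ring.inverse (growthSeries (Γ.gen '' (↑Y : Set V))
              (Γ.parabolic (↑Y : Set V) : Set Γ.DyerGroup))) := by
  simp only [Γ.growthSeries_Amin]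
  ext n
  have hfin : {g : Γ.DyerGroup | wordLength (Set.range Γ.gen) g = n}.Finite := by
    simpa using DyerAux.finite_sphere (A := Set.univ) (Set.finite_range Γ.gen) n
      fun g _ => Γ.mem_closure_range_gen g
  have hcard : ∀ A : Set Γ.DyerGroup,
      (Set.ncard {g ∈ A | wordLength (Set.range Γ.gen) g = n} : ℤ) =
        ∑ g ∈ hfin.toFinset, if g ∈ A then 1 else 0 := by
    intro A
    rw [Finset.sum_boole, Nat.cast_inj, ← Set.ncard_coe_finset]
    congr 1
    ext g
    simp [and_comm]
  have hsgn : ∀ (k : ℕ) (p : PowerSeries ℤ), PowerSeries.coeff n ((-1) ^ k * p) =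
      (-1) ^ k * PowerSeries.coeff n p := by
    intro k p
    rcases neg_one_pow_eq_or (PowerSeries ℤ) k with h | h <;>
      rcases Nat.even_or_odd k with hk | hk <;> simp [hk.neg_one_pow]
  simp only [map_sum, hsgn, growthSeries, PowerSeries.coeff_mk, hcard, Finset.mul_sum]
  rw [Finset.sum_comm]
  refine Finset.sum_congr rfl fun g _ => ?_
  -- `J` is the largest `Y` for which `g` is `Y`-minimal
  set J : Finset V := Finset.univ.filter fun y => Γ.wallVal g (Γ.gen y) = 1 with hJ
  have hA : ∀ Y : Finset V, g ∈ Γ.Amin (↑Y : Set V) ↔ Y ⊆ J := by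
    intro Y
    simp [Γ.mem_Amin_iff, hJ, Finset.subset_iff]
  have hB : g ∈ Γ.Bmin (↑X : Set V) ↔ X = J := by
    rw [Γ.mem_Bmin_iff, ← Finset.coe_inj, hJ]
    simp
  simp only [hA, hB, mul_ite, mul_one, mul_zero]
  rw [← DyerAux.sum_Icc_neg_one_pow X J, ← Finset.sum_filter, Finset.filter_filter]
  refine Finset.sum_congr ?_ fun _ _ => rfl
  ext Y
  simp [Finset.mem_Icc]
end

section
/- Let (D,V) be a Dyer system. Then B_∅ ≠ ∅ if and only if D is of spherical type. -/
/-!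
Membership `g ∈ B_∅` means that every generator `t` is a descent of `g`: some power of
`t` multiplied on the right shortens `g` (`DyerGraph.mem_Bmin_empty_iff`). Passing to `u = g⁻¹`, the
theorem says that an element `u` with every vertex as a left descent exists exactly in spherical
type.

Descents are controlled by a *wall cocycle* `N` (`DyerGraph.coc`), a map from `D` to the functions
from subgroups of `D` to `ℂˣ`, satisfying `N (g h) = N g * (g • N h)`, where `D` acts through
conjugation, and such that `N x` takes the value `ζ_x` at the subgroup `⟨x⟩` and `1` elsewhere;
`ζ_x` is a complex number of multiplicative order `f x`. It is the first component of a homomorphism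
from `D` to a semidirect product. If `N` of a word is nontrivial at a subgroup `C`, then left
multiplication by some element of `C` has the effect of deleting one syllable (`DyerGraph.exchange`),
and `t` is a left descent of `u` exactly when `N u` is nontrivial at `⟨t⟩`.

*Spherical type gives such an element.* The vertices outside `V_2` are central, so the syllable
length is bounded (`DyerGraph.exists_len_bound`). If `u` has maximal length and `N u` were trivial at
`⟨t⟩`, then `N (t u)` would not be, and `t u` would be shortened by a power of `t`, to a length below
that of `u`; so `t` is a descent of `u` in all cases (`DyerGraph.descents_of_max`).

*Such an element gives spherical type.* By the exchange property, a word `L` that begins a reduced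
expression of `u` can be extended on the left by a power of `t`, unless some power of `t` just
deletes a syllable of `L` (`DyerGraph.prepend_power`). Hence every shortest word in `V_2` begins a
reduced expression of `u`, which bounds its length and makes `D_2` finite
(`DyerGraph.finite_of_descents`). If `x ≠ y` were not adjacent, then `u` would similarly have
arbitrarily long alternating prefixes in `x` and `y`, unless a nonempty alternating word starting
with `x` equalled one starting with `y` (`DyerGraph.adj_of_descents`). The latter is excluded by
ping-pong in a representation of `D` on `ℂ^V` by complex reflections, whose pairing is
`-cos (π / m)` on edges and a large constant off the edges (`DyerGraph.exists_rep`,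
`DyerGraph.pingpong`).
-/

open scoped Classical

namespace DyerGraph

open scoped Pointwise

/-! ### Alternating words and homomorphisms out of a Dyer group -/

/-- The alternating product `abab⋯` with `n` factors in a group. -/
def alt {G : Type*} [Group G] (a b : G) : ℕ → G
  | 0 => 1
  | n + 1 => a * alt b a n

lemma lift_altWord {V G : Type*} [Group G] (F : V → G) (n : ℕ) (x y : V) :
    FreeGroup.lift F (altWord x y n) = alt (F x) (F y) n := by
  induction n generalizing x y with
  | zero => simp [altWord, alt]
  | succ n ih => simp [altWord, alt, ih]

/-- For involutions `a`, `b`, the braid relation of length `n` amounts to `(ab)^n = 1`. -/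
lemma alt_eq {G : Type*} [Group G] (n : ℕ) (a b : G) (ha : a * a = 1) (hb : b * b = 1) :
    alt a b n = (a * b) ^ n * alt b a n := by
  induction n generalizing a b with
  | zero => simp [alt]
  | succ n ih =>
    rw [alt, ih b a hb ha, alt]
    have h : a * (b * a) ^ n = (a * b) ^ n * a := (mul_pow_mul a b n).symm
    rw [← mul_assoc, h, pow_succ]
    simp only [mul_assoc]
    rw [← mul_assoc b b, hb, one_mul]

section Lift

variable {V : Type} (Γ : DyerGraph V)

lemma toNat_eq {x : V} (h : Γ.f x = 2) : (Γ.f x).toNat = 2 := by simp [h]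

lemma f_ne_top {x : V} (h : Γ.f x = 2) : Γ.f x ≠ ⊤ := by simp [h]

lemma gen_pow {x : V} (h : Γ.f x ≠ ⊤) : Γ.gen x ^ (Γ.f x).toNat = 1 := by
  have := PresentedGroup.one_of_mem (rels := Γ.rels) (Or.inl ⟨x, h, rfl⟩)
  rw [map_pow] at this
  exact this

lemma gen_sq {x : V} (h : Γ.f x = 2) : Γ.gen x * Γ.gen x = 1 := by
  have := Γ.gen_pow (Γ.f_ne_top h)
  rwa [Γ.toNat_eq h, pow_two] at this

lemma mk_eq_lift (r : FreeGroup V) : PresentedGroup.mk Γ.rels r = FreeGroup.lift Γ.gen r := by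
  have : PresentedGroup.mk Γ.rels = FreeGroup.lift Γ.gen := by
    ext x; simp [gen, PresentedGroup.of]
  rw [this]

lemma gen_alt {x y : V} (h : Γ.Adj x y) :
    alt (Γ.gen x) (Γ.gen y) (Γ.m x y) = alt (Γ.gen y) (Γ.gen x) (Γ.m x y) := by
  have := PresentedGroup.one_of_mem (rels := Γ.rels) (Or.inr ⟨x, y, h, rfl⟩)
  rw [mk_eq_lift, map_mul, map_inv, lift_altWord, lift_altWord, mul_inv_eq_one] at this
  exact this

lemma gen_comm {x y : V} (h : Γ.Adj x y) (hm : Γ.m x y = 2) :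
    Γ.gen x * Γ.gen y = Γ.gen y * Γ.gen x := by
  simpa [hm, alt] using Γ.gen_alt h

lemma gen_mul_pow {x y : V} (h : Γ.Adj x y) (hx : Γ.f x = 2) (hy : Γ.f y = 2) :
    (Γ.gen x * Γ.gen y) ^ Γ.m x y = 1 := by
  have h1 := alt_eq (Γ.m x y) _ _ (Γ.gen_sq hx) (Γ.gen_sq hy)
  rw [Γ.gen_alt h] at h1
  exact (mul_eq_right.mp h1.symm)

/-- The universal property of a Dyer group, with braid relations of length at least `3`
rewritten as Coxeter relations. -/
lemma exists_lift {G : Type*} [Group G] (F : V → G)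
    (h1 : ∀ x, Γ.f x ≠ ⊤ → F x ^ (Γ.f x).toNat = 1)
    (h2 : ∀ x y, Γ.Adj x y → Γ.m x y = 2 → F x * F y = F y * F x)
    (h3 : ∀ x y, Γ.Adj x y → Γ.m x y ≠ 2 → Γ.f x = 2 → Γ.f y = 2 →
      (F x * F y) ^ Γ.m x y = 1) :
    ∃ φ : Γ.DyerGroup →* G, ∀ x, φ (Γ.gen x) = F x := by
  have key : ∀ r ∈ Γ.rels, FreeGroup.lift F r = 1 := by
    rintro r (⟨x, hx, rfl⟩ | ⟨x, y, hxy, rfl⟩)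
    · simpa using h1 x hx
    · rw [map_mul, map_inv, lift_altWord, lift_altWord, mul_inv_eq_one]
      by_cases hm : Γ.m x y = 2
      · simpa [hm, alt] using h2 x y hxy hm
      · obtain ⟨hx, hy⟩ := Γ.compat hxy hm
        have sq : ∀ z, Γ.f z = 2 → F z * F z = 1 := fun z hz => by
          have := h1 z (Γ.f_ne_top hz)
          rwa [Γ.toNat_eq hz, pow_two] at this
        rw [alt_eq _ _ _ (sq x hx) (sq y hy), h3 x y hxy hm hx hy, one_mul]
  exact ⟨PresentedGroup.toGroup key, fun x => PresentedGroup.toGroup.of key⟩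

/-! ### Eigenvalues attached to the vertices -/

/-- A complex number of multiplicative order `f x`: a primitive root of unity, or `2` when
`f x = ∞`. -/
noncomputable def zeta (x : V) : ℂˣ :=
  if Γ.f x = ⊤ then Units.mk0 2 two_ne_zero
  else Units.mk0 (Complex.exp (2 * Real.pi * Complex.I / (Γ.f x).toNat)) (Complex.exp_ne_zero _)

lemma two_le_toNat {x : V} (h : Γ.f x ≠ ⊤) : 2 ≤ (Γ.f x).toNat := by
  have := Γ.f_ge x
  rw [← ENat.natCast_toNat h] at this
  exact_mod_cast this

lemma zeta_prim {x : V} (h : Γ.f x ≠ ⊤) : IsPrimitiveRoot (Γ.zeta x) (Γ.f x).toNat := by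
  rw [← IsPrimitiveRoot.coe_units_iff]
  have := Complex.isPrimitiveRoot_exp (Γ.f x).toNat (by have := Γ.two_le_toNat h; omega)
  simpa [zeta, h] using this

lemma zeta_two {x : V} (h : Γ.f x = 2) : Γ.zeta x = -1 := by
  have := Γ.zeta_prim (Γ.f_ne_top h)
  rw [Γ.toNat_eq h, ← IsPrimitiveRoot.coe_units_iff] at this
  ext
  simpa using this.eq_neg_one_of_two_right

lemma zeta_top {x : V} (h : Γ.f x = ⊤) : (Γ.zeta x : ℂ) = 2 := by simp [zeta, h]

lemma gen_zpow_eq_one {x : V} {k : ℤ} (h : Γ.zeta x ^ k = 1) : Γ.gen x ^ k = 1 := by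
  by_cases hx : Γ.f x = ⊤
  · have h2 : ((2 : ℝ) ^ k) = 1 := by
      have := congrArg (fun z : ℂˣ => (z : ℂ)) h
      simp only [Units.val_zpow_eq_zpow_val, Γ.zeta_top hx, Units.val_one] at this
      simpa using congrArg norm this
    have : k = 0 := by
      rcases (zpow_eq_one_iff_cases₀ (α := ℝ)).mp h2 with h | h | h
      · exact h
      · norm_num at h
      · norm_num at h
    simp [this]
  · obtain ⟨c, rfl⟩ := (Γ.zeta_prim hx).zpow_eq_one_iff_dvd k |>.mp h
    rw [zpow_mul, zpow_natCast, Γ.gen_pow hx, one_zpow]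

lemma zeta_ne_one (x : V) : Γ.zeta x ≠ 1 := by
  by_cases hx : Γ.f x = ⊤
  · intro h
    have := Γ.zeta_top hx
    rw [h] at this
    norm_num at this
  · exact (Γ.zeta_prim hx).ne_one (by have := Γ.two_le_toNat hx; omega)

lemma exists_bound_vertex (x : V) : ∃ c : ℝ, ∀ k : ℤ, Γ.zeta x ^ k ≠ 1 →
    ‖(Γ.zeta x : ℂ) ^ k‖ + 1 < c * ‖(Γ.zeta x : ℂ) ^ k - 1‖ := by
  by_cases hx : Γ.f x = ⊤
  · refine ⟨4, fun k hk => ?_⟩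
    have hk0 : k ≠ 0 := by rintro rfl; simp at hk
    rw [Γ.zeta_top hx]
    have e1 : ‖(2 : ℂ) ^ k‖ = (2 : ℝ) ^ k := by simp
    have e2 : ‖(2 : ℂ) ^ k - 1‖ = |(2 : ℝ) ^ k - 1| := by
      rw [← Real.norm_eq_abs, ← Complex.norm_real]; push_cast; rfl
    rw [e1, e2]
    rcases lt_or_gt_of_ne hk0 with h | h
    · have : (2 : ℝ) ^ k ≤ 2 ^ (-1 : ℤ) := zpow_le_zpow_right₀ (by norm_num) (by omega)
      norm_num at this
      rw [abs_of_neg (by linarith)]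
      linarith
    · have : (2 : ℝ) ^ (1 : ℤ) ≤ 2 ^ k := zpow_le_zpow_right₀ (by norm_num) (by omega)
      norm_num at this
      rw [abs_of_pos (by linarith)]
      linarith
  · have hn := Γ.two_le_toNat hx
    have hfin : (Set.range fun k : ℤ => Γ.zeta x ^ k).Finite := by
      have : IsOfFinOrder (Γ.zeta x) := isOfFinOrder_iff_pow_eq_one.mpr
        ⟨_, by omega, (Γ.zeta_prim hx).pow_eq_one⟩
      have := this.finite_zpowers
      exact this.subset (by rintro _ ⟨k, rfl⟩; exact ⟨k, rfl⟩)
    obtain ⟨b, hb⟩ := (hfin.image fun z : ℂˣ => (‖(z : ℂ)‖ + 1) / ‖(z : ℂ) - 1‖).bddAbove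
    refine ⟨b + 1, fun k hk => ?_⟩
    have := hb ⟨Γ.zeta x ^ k, ⟨k, rfl⟩, rfl⟩
    simp only [Units.val_zpow_eq_zpow_val] at this
    have hpos : 0 < ‖(Γ.zeta x : ℂ) ^ k - 1‖ := by
      rw [norm_pos_iff, sub_ne_zero]
      intro h
      exact hk (by ext; simpa using h)
    rw [div_le_iff₀ hpos] at this
    linarith

end Lift

/-! ### The wall cocycle -/

section Cocycle

variable {V : Type} (Γ : DyerGraph V)

/-- The action of a group on functions on its subgroups, induced by conjugation. -/
def wallAut (G : Type*) [Group G] : G →* MulAut (Subgroup G → ℂˣ) :=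
  (mulAutArrow (G := MulAut G) (A := Subgroup G) (M := ℂˣ)).comp MulAut.conj

lemma wallAut_apply {G : Type*} [Group G] (g : G) (F : Subgroup G → ℂˣ) (C : Subgroup G) :
    wallAut G g F C = F (MulAut.conj g⁻¹ • C) := by
  rw [map_inv]; rfl

lemma wallAut_mulSingle {G : Type*} [Group G] (g : G) (C : Subgroup G) (q : ℂˣ) :
    wallAut G g (Pi.mulSingle C q) = Pi.mulSingle (MulAut.conj g • C) q := by
  ext C'
  rw [wallAut_apply]
  by_cases h : C' = MulAut.conj g • C
  · subst h; simp
  · rw [Pi.mulSingle_eq_of_ne h, Pi.mulSingle_eq_of_ne]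
    rintro rfl
    simp at h

lemma conj_smul_zpowers {G : Type*} [Group G] (g h : G) :
    MulAut.conj g • Subgroup.zpowers h = Subgroup.zpowers (g * h * g⁻¹) := by
  exact MonoidHom.map_zpowers (MulAut.conj g).toMonoidHom h

/-- The wall of a vertex `x`: the cyclic subgroup generated by `x`. Its conjugates are the walls
crossed by words. -/
def wall (x : V) : Subgroup Γ.DyerGroup := Subgroup.zpowers (Γ.gen x)

/-- For involutions, the first component of `(XY)^n` is the product of the values `-1` placed at
the walls of the first `2n` reflections `(xy)^j x`. -/
lemma semidirect_pow {G : Type*} [Group G] (x y : G) (hx : x * x = 1) (hy : y * y = 1) (n : ℕ) :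
    ((⟨Pi.mulSingle (Subgroup.zpowers x) (-1), x⟩ *
      ⟨Pi.mulSingle (Subgroup.zpowers y) (-1), y⟩ :
        (Subgroup G → ℂˣ) ⋊[wallAut G] G) ^ n) =
      ⟨∏ j ∈ Finset.range (2 * n), Pi.mulSingle (Subgroup.zpowers ((x * y) ^ j * x)) (-1),
        (x * y) ^ n⟩ := by
  have hxi : x⁻¹ = x := inv_eq_of_mul_eq_one_left hx
  have hyi : y⁻¹ = y := inv_eq_of_mul_eq_one_left hy
  induction n with
  | zero => simp
  | succ n ih =>
    have hinv : x * ((x * y) ^ n)⁻¹ = (x * y) ^ n * x := by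
      rw [← inv_pow, mul_inv_rev, hxi, hyi]
      exact (mul_pow_mul x y n).symm
    have e1 : (x * y) ^ n * x * ((x * y) ^ n)⁻¹ = (x * y) ^ (2 * n) * x := by
      rw [mul_assoc, hinv, ← mul_assoc, ← pow_add, two_mul]
    have e2 : (x * y) ^ n * (x * y * x⁻¹) * ((x * y) ^ n)⁻¹ = (x * y) ^ (2 * n + 1) * x := by
      rw [hxi, mul_assoc, mul_assoc (x * y) x, hinv, ← mul_assoc, ← mul_assoc, ← pow_succ,
        ← pow_add]
      congr 2; ring
    rw [pow_succ, ih]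
    refine SemidirectProduct.ext ?_ ?_
    · simp only [SemidirectProduct.mul_left, wallAut_mulSingle, map_mul, conj_smul_zpowers]
      rw [e1, e2, show 2 * (n + 1) = 2 * n + 1 + 1 by ring, Finset.prod_range_succ,
        Finset.prod_range_succ, mul_assoc]
    · exact (pow_succ _ _).symm

lemma semidirect_pow_eq_one {G : Type*} [Group G] (x y : G) (hx : x * x = 1) (hy : y * y = 1)
    (n : ℕ) (h : (x * y) ^ n = 1) :
    ((⟨Pi.mulSingle (Subgroup.zpowers x) (-1), x⟩ *
      ⟨Pi.mulSingle (Subgroup.zpowers y) (-1), y⟩ :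
        (Subgroup G → ℂˣ) ⋊[wallAut G] G) ^ n) = 1 := by
  rw [semidirect_pow x y hx hy]
  refine SemidirectProduct.ext ?_ h
  -- Every reflection occurs twice among the `2n`, so the signs cancel.
  simp only [SemidirectProduct.one_left]
  rw [two_mul, Finset.prod_range_add, ← Finset.prod_mul_distrib]
  refine Finset.prod_eq_one fun j _ => ?_
  rw [pow_add, h, one_mul, ← Pi.mulSingle_mul]
  simp

lemma exists_cocycleHom : ∃ φ : Γ.DyerGroup →* (Subgroup Γ.DyerGroup → ℂˣ) ⋊[wallAut Γ.DyerGroup]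
    Γ.DyerGroup, ∀ x, φ (Γ.gen x) = ⟨Pi.mulSingle (Γ.wall x) (Γ.zeta x), Γ.gen x⟩ := by
  refine Γ.exists_lift _ ?_ ?_ ?_
  · intro x hx
    have h : ∀ n : ℕ, ((⟨Pi.mulSingle (Γ.wall x) (Γ.zeta x), Γ.gen x⟩ :
        (Subgroup Γ.DyerGroup → ℂˣ) ⋊[wallAut Γ.DyerGroup] Γ.DyerGroup) ^ n) =
        ⟨Pi.mulSingle (Γ.wall x) (Γ.zeta x ^ n), Γ.gen x ^ n⟩ := by
      intro n
      induction n with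
      | zero => simp
      | succ n ih =>
        rw [pow_succ, ih]
        refine SemidirectProduct.ext ?_ ?_
        · simp only [SemidirectProduct.mul_left, wallAut_mulSingle, wall, conj_smul_zpowers]
          rw [(Commute.pow_self (Γ.gen x) n).eq, mul_inv_cancel_right, ← Pi.mulSingle_mul,
            pow_succ]
        · exact (pow_succ _ _).symm
    rw [h, Γ.gen_pow hx, (Γ.zeta_prim hx).pow_eq_one, Pi.mulSingle_one]
    rfl
  · intro x y hxy hm
    have hc := Γ.gen_comm hxy hm
    refine SemidirectProduct.ext ?_ ?_
    · simp only [SemidirectProduct.mul_left, wallAut_mulSingle, wall, conj_smul_zpowers]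
      rw [hc, mul_inv_cancel_right, ← hc, mul_inv_cancel_right, mul_comm]
    · simpa using hc
  · intro x y hxy _ hx hy
    rw [Γ.zeta_two hx, Γ.zeta_two hy]
    exact semidirect_pow_eq_one _ _ (Γ.gen_sq hx) (Γ.gen_sq hy) _ (Γ.gen_mul_pow hxy hx hy)

/-- The wall cocycle: a map `N` from the Dyer group to functions on its subgroups with
`N (gh) = N g · (g • N h)` whose value on `x` is concentrated at the wall of `x`, where it is
`zeta x`. -/
noncomputable def coc (g : Γ.DyerGroup) : Subgroup Γ.DyerGroup → ℂˣ :=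
  (Γ.exists_cocycleHom.choose g).left

lemma cocycleHom_right (g : Γ.DyerGroup) : (Γ.exists_cocycleHom.choose g).right = g := by
  have : SemidirectProduct.rightHom.comp Γ.exists_cocycleHom.choose = MonoidHom.id _ := by
    refine PresentedGroup.ext fun x => ?_
    have := Γ.exists_cocycleHom.choose_spec x
    simp only [MonoidHom.comp_apply]
    change SemidirectProduct.rightHom (Γ.exists_cocycleHom.choose (Γ.gen x)) = _
    rw [this]; rfl
  exact DFunLike.congr_fun this g

lemma coc_mul (g h : Γ.DyerGroup) (C : Subgroup Γ.DyerGroup) :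
    Γ.coc (g * h) C = Γ.coc g C * Γ.coc h (MulAut.conj g⁻¹ • C) := by
  simp only [coc, map_mul, SemidirectProduct.mul_left, Pi.mul_apply, cocycleHom_right,
    wallAut_apply]

lemma coc_one : Γ.coc 1 = 1 := by simp [coc]

lemma conj_wall (x : V) (k : ℤ) : MulAut.conj (Γ.gen x ^ k) • Γ.wall x = Γ.wall x :=
  Subgroup.conj_smul_eq_self_of_mem (H := Γ.wall x) (h := Γ.gen x ^ k) ⟨k, rfl⟩

lemma coc_gen (x : V) : Γ.coc (Γ.gen x) = Pi.mulSingle (Γ.wall x) (Γ.zeta x) := by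
  rw [coc, Γ.exists_cocycleHom.choose_spec x]

lemma coc_zpow (x : V) (k : ℤ) :
    Γ.coc (Γ.gen x ^ k) = Pi.mulSingle (Γ.wall x) (Γ.zeta x ^ k) := by
  have key : ∀ k : ℤ, Γ.coc (Γ.gen x ^ (k + 1)) =
      Γ.coc (Γ.gen x ^ k) * Pi.mulSingle (Γ.wall x) (Γ.zeta x) := by
    intro k
    ext C
    rw [zpow_add_one, coc_mul, coc_gen, Pi.mul_apply,
      ← wallAut_apply _ (Pi.mulSingle (Γ.wall x) (Γ.zeta x)), wallAut_mulSingle,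
      conj_wall]
  induction k with
  | zero => simp [coc_one]
  | succ n ih => rw [key, ih, ← Pi.mulSingle_mul, zpow_add_one]
  | pred n ih =>
    have := key (-n - 1)
    rw [sub_add_cancel, ih, ← div_eq_iff_eq_mul, ← Pi.mulSingle_div] at this
    rw [← this, zpow_sub_one, div_eq_mul_inv]

end Cocycle

/-! ### Syllable words and the exchange property -/

section Words

variable {V : Type} (Γ : DyerGraph V)

/-- The element represented by a list of syllables. -/
def ev (L : List (V × ℤ)) : Γ.DyerGroup := (L.map fun p => Γ.gen p.1 ^ p.2).prod

@[simp] lemma ev_nil : Γ.ev [] = 1 := rfl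

@[simp] lemma ev_cons (p : V × ℤ) (L : List (V × ℤ)) :
    Γ.ev (p :: L) = Γ.gen p.1 ^ p.2 * Γ.ev L := by simp [ev]

@[simp] lemma ev_append (L M : List (V × ℤ)) : Γ.ev (L ++ M) = Γ.ev L * Γ.ev M := by simp [ev]

/-- The syllable length with respect to the standard generators. -/
noncomputable def len (g : Γ.DyerGroup) : ℕ := sylLength (Set.range Γ.gen) g

lemma len_ev_le (L : List (V × ℤ)) : Γ.len (Γ.ev L) ≤ L.length := by
  refine Nat.sInf_le ⟨L.map fun p => (Γ.gen p.1, p.2), by simp, ?_, ?_⟩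
  · simp only [List.mem_map]
    rintro _ ⟨p, _, rfl⟩
    exact ⟨p.1, rfl⟩
  · simp [ev, Function.comp_def]

lemma exists_ev (g : Γ.DyerGroup) : ∃ L, Γ.ev L = g := by
  have hg : g ∈ Subgroup.closure (Set.range Γ.gen) := by
    have := PresentedGroup.closure_range_of Γ.rels
    change Subgroup.closure (Set.range Γ.gen) = ⊤ at this
    rw [this]; trivial
  induction hg using Subgroup.closure_induction with
  | mem x hx => obtain ⟨v, rfl⟩ := hx; exact ⟨[(v, 1)], by simp⟩
  | one => exact ⟨[], rfl⟩
  | mul a b _ _ ha hb =>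
    obtain ⟨L, rfl⟩ := ha
    obtain ⟨M, rfl⟩ := hb
    exact ⟨L ++ M, by simp⟩
  | inv a _ ha =>
    obtain ⟨L, rfl⟩ := ha
    refine ⟨(L.map fun p => (p.1, -p.2)).reverse, ?_⟩
    simp [ev, List.prod_inv_reverse, Function.comp_def]

lemma exists_reduced (g : Γ.DyerGroup) : ∃ L, Γ.ev L = g ∧ L.length = Γ.len g := by
  have hne : {n | ∃ w : List (Γ.DyerGroup × ℤ), w.length = n ∧ (∀ p ∈ w, p.1 ∈ Set.range Γ.gen) ∧
      (w.map fun p => p.1 ^ p.2).prod = g}.Nonempty := by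
    obtain ⟨L, rfl⟩ := Γ.exists_ev g
    refine ⟨_, L.map fun p => (Γ.gen p.1, p.2), rfl, ?_, ?_⟩
    · simp only [List.mem_map]
      rintro _ ⟨p, _, rfl⟩
      exact ⟨p.1, rfl⟩
    · simp [ev, Function.comp_def]
  obtain ⟨w, hw, hmem, hprod⟩ := Nat.sInf_mem hne
  have key : ∀ w : List (Γ.DyerGroup × ℤ), (∀ p ∈ w, p.1 ∈ Set.range Γ.gen) →
      ∃ L : List (V × ℤ), L.length = w.length ∧ Γ.ev L = (w.map fun p => p.1 ^ p.2).prod := by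
    intro w
    induction w with
    | nil => exact fun _ => ⟨[], rfl, rfl⟩
    | cons p w ih =>
      intro h
      obtain ⟨L, h1, h2⟩ := ih fun q hq => h q (List.mem_cons_of_mem _ hq)
      obtain ⟨v, hv⟩ := h p List.mem_cons_self
      exact ⟨(v, p.2) :: L, by simp [h1], by simp [h2, hv]⟩
  obtain ⟨L, h1, h2⟩ := key w hmem
  exact ⟨L, h2.trans hprod, h1.trans hw⟩

lemma len_mul_le (a b : Γ.DyerGroup) : Γ.len (a * b) ≤ Γ.len a + Γ.len b := by
  obtain ⟨L, rfl, hL⟩ := Γ.exists_reduced a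
  obtain ⟨M, rfl, hM⟩ := Γ.exists_reduced b
  rw [← hL, ← hM, ← ev_append, ← List.length_append]
  exact Γ.len_ev_le _

lemma len_inv_le (a : Γ.DyerGroup) : Γ.len a⁻¹ ≤ Γ.len a := by
  obtain ⟨L, rfl, hL⟩ := Γ.exists_reduced a
  have : (Γ.ev L)⁻¹ = Γ.ev (L.map fun p => (p.1, -p.2)).reverse := by
    simp [ev, List.prod_inv_reverse, Function.comp_def]
  rw [this, ← hL]
  exact (Γ.len_ev_le _).trans (by simp)

lemma len_inv (a : Γ.DyerGroup) : Γ.len a⁻¹ = Γ.len a :=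
  le_antisymm (Γ.len_inv_le a) (by simpa using Γ.len_inv_le a⁻¹)

lemma len_zpow_le (x : V) (k : ℤ) : Γ.len (Γ.gen x ^ k) ≤ 1 := by
  simpa using Γ.len_ev_le [(x, k)]

/-- Exchange property: if the cocycle of a word is nontrivial at a wall `C`, then some element of
`C` deletes one syllable of the word. -/
lemma exchange (L : List (V × ℤ)) (C : Subgroup Γ.DyerGroup) (h : Γ.coc (Γ.ev L) C ≠ 1) :
    ∃ i < L.length, ∃ c ∈ C, c * Γ.ev (L.take (i + 1)) = Γ.ev (L.take i) := by
  induction L generalizing C with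
  | nil => simp [coc_one] at h
  | cons p L ih =>
    rw [ev_cons, coc_mul, coc_zpow] at h
    by_cases hC : C = Γ.wall p.1
    · refine ⟨0, by simp, Γ.gen p.1 ^ (-p.2), ?_, by simp⟩
      rw [hC]; exact ⟨_, rfl⟩
    · rw [Pi.mulSingle_eq_of_ne hC, one_mul] at h
      obtain ⟨i, hi, c, hc, hce⟩ := ih _ h
      refine ⟨i + 1, by simpa using hi, MulAut.conj (Γ.gen p.1 ^ p.2) c, ?_, ?_⟩
      · rw [map_inv, Subgroup.mem_inv_pointwise_smul_iff] at hc
        exact hc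
      · simp only [List.take_succ_cons, ev_cons, MulAut.conj_apply]
        rw [← hce]; group

/-- Exchange at the wall of a vertex. -/
lemma exchange_vertex (L : List (V × ℤ)) (t : V) (h : Γ.coc (Γ.ev L) (Γ.wall t) ≠ 1) :
    ∃ i < L.length, ∃ b : ℤ, Γ.gen t ^ b * Γ.ev (L.take (i + 1)) = Γ.ev (L.take i) := by
  obtain ⟨i, hi, c, ⟨b, rfl⟩, h⟩ := Γ.exchange L _ h
  exact ⟨i, hi, b, h⟩

lemma ev_delete (L : List (V × ℤ)) (i : ℕ) (c : Γ.DyerGroup)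
    (h : c * Γ.ev (L.take (i + 1)) = Γ.ev (L.take i)) :
    c * Γ.ev L = Γ.ev (L.take i ++ L.drop (i + 1)) := by
  rw [ev_append, ← h, mul_assoc, ← ev_append, List.take_append_drop]

lemma exists_len_lt (u : Γ.DyerGroup) (t : V) (h : Γ.coc u (Γ.wall t) ≠ 1) :
    ∃ b : ℤ, Γ.len (Γ.gen t ^ b * u) < Γ.len u := by
  obtain ⟨L, rfl, hL⟩ := Γ.exists_reduced u
  obtain ⟨i, hi, b, hb⟩ := Γ.exchange_vertex L t h
  refine ⟨b, ?_⟩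
  rw [Γ.ev_delete L i _ hb, ← hL]
  refine (Γ.len_ev_le _).trans_lt ?_
  simp only [List.length_append, List.length_take, List.length_drop]
  omega

/-- A left descent `t` of `u` is detected by the cocycle of `u` at the wall of `t`. -/
lemma coc_ne_one_of_descent (u : Γ.DyerGroup) (t : V) (k : ℤ)
    (h : Γ.len (Γ.gen t ^ k * u) < Γ.len u) : Γ.coc u (Γ.wall t) ≠ 1 := by
  -- Compare `u` with an element `t ^ j * u` of minimal length in the coset `⟨t⟩ u`.
  obtain ⟨j, hj⟩ : ∃ j : ℤ, ∀ i : ℤ, Γ.len (Γ.gen t ^ j * u) ≤ Γ.len (Γ.gen t ^ i * u) := by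
    obtain ⟨j, hj⟩ := (measure fun j : ℤ => Γ.len (Γ.gen t ^ j * u)).wf.has_min Set.univ ⟨0, trivial⟩
    exact ⟨j, fun i => not_lt.mp (hj.2 i trivial)⟩
  have h0 : Γ.coc (Γ.gen t ^ j * u) (Γ.wall t) = 1 := by
    by_contra hne
    obtain ⟨b, hb⟩ := Γ.exists_len_lt _ t hne
    rw [← mul_assoc, ← zpow_add] at hb
    exact absurd (hj (b + j)) (not_le.mpr hb)
  rw [coc_mul, coc_zpow, Pi.mulSingle_eq_same, ← zpow_neg, conj_wall] at h0
  intro h1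
  rw [h1, mul_one] at h0
  have := hj k
  rw [Γ.gen_zpow_eq_one h0, one_mul] at this
  omega

/-- Extending a prescribed prefix: if `u` has a reduced expression starting with `L` and `t` is a
left descent of `u`, then either `u` has one starting with a power of `t` followed by `L`, or a
power of `t` deletes a syllable of `L`. -/
lemma prepend_power (u : Γ.DyerGroup) (t : V) (k : ℤ) (hk : Γ.len (Γ.gen t ^ k * u) < Γ.len u)
    (L M : List (V × ℤ)) (hu : Γ.ev (L ++ M) = u) (hlen : (L ++ M).length = Γ.len u) :
    ∃ b : ℤ, Γ.gen t ^ b ≠ 1 ∧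
      ((∃ i < L.length, Γ.gen t ^ b * Γ.ev (L.take (i + 1)) = Γ.ev (L.take i)) ∨
        ∃ M', Γ.ev ((t, -b) :: (L ++ M')) = u ∧ ((t, -b) :: (L ++ M')).length = Γ.len u) := by
  have hc := Γ.coc_ne_one_of_descent u t k hk
  rw [← hu] at hc
  obtain ⟨i, hi, b, hb⟩ := Γ.exchange_vertex _ t hc
  have hdel := Γ.ev_delete _ i _ hb
  have hlt : Γ.len (Γ.gen t ^ b * u) < Γ.len u := by
    rw [← hu, hdel, hu, ← hlen]
    refine (Γ.len_ev_le _).trans_lt ?_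
    simp only [List.length_append, List.length_take, List.length_drop] at hi ⊢
    omega
  refine ⟨b, fun h1 => by simp [h1] at hlt, ?_⟩
  rcases lt_or_ge i L.length with hiL | hiL
  · left
    refine ⟨i, hiL, ?_⟩
    rwa [List.take_append_of_le_length (by omega), List.take_append_of_le_length (by omega)] at hb
  · right
    refine ⟨M.take (i - L.length) ++ M.drop (i - L.length + 1), ?_, ?_⟩
    · rw [List.take_append, List.drop_append, List.take_of_length_le hiL,
        List.drop_of_length_le (by omega : L.length ≤ i + 1), List.nil_append, hu,
        show i + 1 - L.length = i - L.length + 1 by omega] at hdel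
      rw [ev_cons, ← List.append_assoc, ← hdel]
      simp
    · simp only [List.length_append, List.length_cons, List.length_take, List.length_drop] at *
      omega

end Words

/-! ### A linear representation separating nonadjacent vertices -/

section Representation

variable {V : Type} (Γ : DyerGraph V)

/-- Matrix of the pairing behind the reflection representation: `1` on the diagonal,
`-cos (π / m)` on edges, and a free parameter `c` on nonadjacent pairs. -/
noncomputable def pairing (c : ℂ) (x w : V) : ℂ :=
  if w = x then 1 else if Γ.Adj x w then -Complex.cos (Real.pi / Γ.m x w) else c

/-- The linear form `v ↦ ∑ w, pairing x w * v w`. -/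
noncomputable def form [Fintype V] (c : ℂ) (x : V) : Module.Dual ℂ (V → ℂ) :=
  ∑ w, Γ.pairing c x w • LinearMap.proj w

lemma form_single [Fintype V] (c : ℂ) (x w : V) : Γ.form c x (Pi.single w 1) = Γ.pairing c x w := by
  simp [form, Pi.single_apply]

lemma form_self [Fintype V] (c : ℂ) (x : V) : Γ.form c x (Pi.single x 1) = 1 := by
  simp [form_single, pairing]

/-- The one-parameter group of complex reflections `v ↦ v + (z - 1) ψ_x(v) e_x`. -/
noncomputable def dil [Fintype V] (c : ℂ) (x : V) : ℂˣ →* Module.End ℂ (V → ℂ) where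
  toFun z := LinearMap.id + ((z : ℂ) - 1) • (Γ.form c x).smulRight (Pi.single x 1)
  map_one' := by
    ext v
    simp
  map_mul' z w := by
    refine LinearMap.ext fun v => ?_
    simp only [Units.val_mul, LinearMap.add_apply, LinearMap.id_coe, id_eq, LinearMap.smul_apply,
      LinearMap.smulRight_apply, Module.End.mul_apply, map_add, map_smul, form_self]
    module

/-- `dil` with values in linear automorphisms. -/
noncomputable def dilEquiv [Fintype V] (c : ℂ) (x : V) : ℂˣ →* ((V → ℂ) ≃ₗ[ℂ] (V → ℂ)) :=
  (LinearMap.GeneralLinearGroup.generalLinearEquiv ℂ (V → ℂ)).toMonoidHom.comp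
    (Γ.dil c x).toHomUnits

lemma dilEquiv_apply [Fintype V] (c : ℂ) (x : V) (z : ℂˣ) (v : V → ℂ) :
    Γ.dilEquiv c x z v = v + (((z : ℂ) - 1) * Γ.form c x v) • Pi.single x 1 := by
  have : Γ.dilEquiv c x z v = Γ.dil c x z v := rfl
  rw [this]
  simp [dil, smul_smul]

/-- The product of two complex reflections of order two whose pairing is `-cos (π / m)` has order
dividing `m`. -/
lemma reflection_pow (x y : V → ℂ) (f g : Module.Dual ℂ (V → ℂ)) (hf : f x = 2) (hg : g y = 2)
    (m : ℕ) (hm : 3 ≤ m) (hfy : f y = -2 * Complex.cos (Real.pi / m))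
    (hgx : g x = -2 * Complex.cos (Real.pi / m)) :
    (Module.reflection hf * Module.reflection hg) ^ m = 1 := by
  have hm0 : (m : ℝ) ≠ 0 := by positivity
  set θ : ℝ := 2 * Real.pi / m with hθ
  have hsin : Real.sin θ ≠ 0 := by
    apply ne_of_gt
    apply Real.sin_pos_of_pos_of_lt_pi
    · positivity
    · rw [hθ, div_lt_iff₀ (by positivity)]
      have : (3 : ℝ) ≤ m := by exact_mod_cast hm
      nlinarith [Real.pi_pos]
  have hsin' : Complex.sin θ ≠ 0 := by rw [← Complex.ofReal_sin]; exact_mod_cast hsin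
  have ht : 2 * Complex.cos θ = f y * g x - 2 := by
    rw [hfy, hgx, show (θ : ℂ) = 2 * (Real.pi / m) by rw [hθ]; push_cast; ring,
      Complex.cos_two_mul]
    ring
  have hmθ : (m : ℂ) * θ = 2 * Real.pi := by
    have : (m : ℂ) ≠ 0 := by exact_mod_cast hm0
    rw [hθ]; push_cast; field_simp
  have S_mul := fun n : ℤ => Polynomial.Chebyshev.S_two_mul_complex_cos θ n
  have hzero : ∀ n : ℤ, Complex.sin ((n + 1) * θ) = 0 →
      (Polynomial.Chebyshev.S ℂ n).eval (2 * Complex.cos θ) = 0 := fun n h => by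
    have := S_mul n
    rw [h] at this
    exact (mul_eq_zero.mp this).resolve_right hsin'
  refine LinearEquiv.ext fun z => ?_
  rw [Module.reflection_mul_reflection_pow_apply hf hg m z _ ht]
  rcases Nat.even_or_odd' m with ⟨k, hk | hk⟩
  · -- `m = 2k`: both coefficients contain the factor `S_{k-1}`, proportional to `sin (kθ) = sin π`.
    have hS : (Polynomial.Chebyshev.S ℂ (k - 1)).eval (2 * Complex.cos θ) = 0 := by
      apply hzero
      have : (((k : ℤ) - 1 : ℤ) + 1 : ℂ) * θ = Real.pi := by
        rw [hk] at hmθ; push_cast at hmθ ⊢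
        linear_combination hmθ / 2
      rw [this]; simp
    rw [show ((m : ℤ) - 2) / 2 = k - 1 by omega, show ((m : ℤ) - 1) / 2 = k - 1 by omega, hS]
    simp
  · -- `m = 2k + 1`: both coefficients contain `S_k + S_{k-1}`.
    have hS : (Polynomial.Chebyshev.S ℂ k).eval (2 * Complex.cos θ) +
        (Polynomial.Chebyshev.S ℂ (k - 1)).eval (2 * Complex.cos θ) = 0 := by
      have h1 := S_mul k
      have h2 := S_mul (k - 1)
      have e1 : (((k : ℤ) : ℂ) + 1) * θ = 2 * Real.pi - k * θ := by
        rw [hk] at hmθ; push_cast at hmθ ⊢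
        linear_combination hmθ
      have e2 : (((k : ℤ) - 1 : ℤ) + 1 : ℂ) * θ = k * θ := by push_cast; ring
      rw [e1, Complex.sin_two_pi_sub] at h1
      rw [e2] at h2
      have : ((Polynomial.Chebyshev.S ℂ k).eval (2 * Complex.cos θ) +
        (Polynomial.Chebyshev.S ℂ (k - 1)).eval (2 * Complex.cos θ)) * Complex.sin θ = 0 := by
        rw [add_mul, h1, h2]; ring
      exact (mul_eq_zero.mp this).resolve_right hsin'
    rw [show ((m : ℤ) - 2) / 2 = k - 1 by omega, show ((m : ℤ) - 1) / 2 = k by omega,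
      show ((m : ℤ) - 3) / 2 = k - 1 by omega, show (m : ℤ) / 2 = k by omega, hS]
    simp

lemma exists_rep [Fintype V] (c : ℂ) : ∃ ρ : Γ.DyerGroup →* ((V → ℂ) ≃ₗ[ℂ] (V → ℂ)),
    ∀ x, ρ (Γ.gen x) = Γ.dilEquiv c x (Γ.zeta x) := by
  have hne : ∀ {x y}, Γ.Adj x y → y ≠ x := fun h e => Γ.loopless _ (e ▸ h)
  have hp : ∀ {x y}, Γ.Adj x y → Γ.pairing c x y = -Complex.cos (Real.pi / Γ.m x y) :=
    fun h => by rw [pairing, if_neg (hne h), if_pos h]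
  refine Γ.exists_lift _ ?_ ?_ ?_
  · intro x hx
    rw [← map_pow, (Γ.zeta_prim hx).pow_eq_one, map_one]
  · intro x y hxy hm
    have h1 : Γ.pairing c x y = 0 := by rw [hp hxy, hm]; simp
    have h2 : Γ.pairing c y x = 0 := by rw [hp (Γ.symm hxy), Γ.m_symm, hm]; simp
    refine LinearEquiv.ext fun v => ?_
    simp only [LinearEquiv.mul_apply, dilEquiv_apply, map_add, map_smul, form_single, h1, h2]
    module
  · intro x y hxy hm hx hy
    have hrefl : ∀ z, Γ.f z = 2 → ∀ h : ((2 : ℂ) • Γ.form c z) (Pi.single z 1) = 2,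
        Γ.dilEquiv c z (Γ.zeta z) = Module.reflection h := by
      intro z hz h
      refine LinearEquiv.ext fun v => ?_
      rw [dilEquiv_apply, Module.reflection_apply, Γ.zeta_two hz]
      simp only [Units.val_neg, Units.val_one, LinearMap.smul_apply, smul_eq_mul]
      module
    have h2 : ∀ z, ((2 : ℂ) • Γ.form c z) (Pi.single z 1) = 2 := fun z => by simp [form_self]
    rw [hrefl x hx (h2 x), hrefl y hy (h2 y)]
    have := Γ.m_ge hxy
    refine reflection_pow _ _ _ _ _ _ _ (by omega) ?_ ?_
    · simp [form_single, hp hxy]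
    · simp [form_single, hp (Γ.symm hxy), Γ.m_symm y x]

/-- Words whose syllables are alternately nontrivial powers of `x` and `y`, the first one (if any)
being a power of `x`. -/
def IsAlt (x y : V) : List (V × ℤ) → Prop
  | [] => True
  | p :: L => p.1 = x ∧ Γ.gen x ^ p.2 ≠ 1 ∧ IsAlt y x L

lemma IsAlt.take {x y : V} {L : List (V × ℤ)} (h : Γ.IsAlt x y L) (i : ℕ) :
    Γ.IsAlt x y (L.take i) := by
  induction L generalizing x y i with
  | nil => simpa using h
  | cons p L ih =>
    cases i with
    | zero => trivial
    | succ i => exact ⟨h.1, h.2.1, ih h.2.2 i⟩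

lemma pairing_nonadj (c : ℂ) {x y : V} (hne : x ≠ y) (h : ¬ Γ.Adj x y) : Γ.pairing c x y = c := by
  rw [pairing, if_neg hne.symm, if_neg h]

/-- Ping-pong: for `c` large, an alternating word starting with `x` moves `e_x + e_y` to a vector
whose `x`-coordinate dominates, strictly so unless the word is empty. -/
lemma pingpong [Fintype V] (c : ℝ) (ρ : Γ.DyerGroup →* ((V → ℂ) ≃ₗ[ℂ] (V → ℂ)))
    (hρ : ∀ x, ρ (Γ.gen x) = Γ.dilEquiv c x (Γ.zeta x)) (L : List (V × ℤ)) (x y : V)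
    (hcx : ∀ k : ℤ, Γ.zeta x ^ k ≠ 1 → ‖(Γ.zeta x : ℂ) ^ k‖ + 1 < c * ‖(Γ.zeta x : ℂ) ^ k - 1‖)
    (hcy : ∀ k : ℤ, Γ.zeta y ^ k ≠ 1 → ‖(Γ.zeta y : ℂ) ^ k‖ + 1 < c * ‖(Γ.zeta y : ℂ) ^ k - 1‖)
    (hne : x ≠ y) (hxy : ¬ Γ.Adj x y) (hL : Γ.IsAlt x y L) :
    ∃ α β : ℂ, ρ (Γ.ev L) (Pi.single x 1 + Pi.single y 1) = α • Pi.single x 1 + β • Pi.single y 1 ∧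
      α ≠ 0 ∧ ‖β‖ ≤ ‖α‖ ∧ (L ≠ [] → ‖β‖ < ‖α‖) := by
  induction L generalizing x y with
  | nil => exact ⟨1, 1, by simp, one_ne_zero, le_rfl, fun h => absurd rfl h⟩
  | cons p L ih =>
    obtain ⟨h1, h2, h3⟩ := hL
    obtain ⟨β, α, he, hβ, hle, -⟩ :=
      ih y x hcy hcx hne.symm (fun h => hxy (Γ.symm h)) h3
    obtain ⟨x', k⟩ := p
    simp only at h1 h2
    subst h1
    set z : ℂˣ := Γ.zeta x' ^ k with hz
    have hzk : (Γ.zeta x' : ℂ) ^ k = z := by simp [hz]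
    have hz1 : Γ.zeta x' ^ k ≠ 1 := fun h => by
      -- `x ^ k = 1` already follows from `zeta x ^ k = 1`.
      exact h2 (Γ.gen_zpow_eq_one h)
    have hc := hcx k hz1
    rw [hzk] at hc
    have key : ‖β‖ < ‖(z : ℂ) * α + ((z : ℂ) - 1) * c * β‖ := by
      have hβ' : 0 < ‖β‖ := norm_pos_iff.mpr hβ
      have htri : ‖((z : ℂ) - 1) * c * β‖ ≤ ‖(z : ℂ) * α + ((z : ℂ) - 1) * c * β‖ + ‖(z : ℂ) * α‖ := by
        have := norm_sub_le ((z : ℂ) * α + ((z : ℂ) - 1) * c * β) ((z : ℂ) * α)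
        simpa using this
      have e1 : c * ‖(z : ℂ) - 1‖ * ‖β‖ ≤ ‖((z : ℂ) - 1) * c * β‖ := by
        rw [norm_mul, norm_mul, Complex.norm_real, mul_comm c]
        gcongr
        exact Real.le_norm_self c
      have e2 : ‖(z : ℂ) * α‖ ≤ ‖(z : ℂ)‖ * ‖β‖ := by rw [norm_mul]; gcongr
      have e3 := mul_lt_mul_of_pos_right hc hβ'
      linarith
    refine ⟨(z : ℂ) * α + ((z : ℂ) - 1) * c * β, β, ?_, ?_, key.le, fun _ => key⟩
    · rw [ev_cons, map_mul, map_zpow, hρ, ← map_zpow, LinearEquiv.mul_apply,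
        add_comm (Pi.single x' 1), he, dilEquiv_apply]
      simp only [map_add, map_smul, form_self, form_single, Γ.pairing_nonadj _ hne hxy, smul_eq_mul]
      rw [← hz]
      module
    · intro h
      rw [h, norm_zero] at key
      exact absurd key (not_lt.mpr (norm_nonneg _))

/-- For nonadjacent `x ≠ y`, a nonempty alternating word starting with `x` never equals an
alternating word starting with `y`. -/
lemma isAlt_ev_ne [Fintype V] {x y : V} (hne : x ≠ y) (hxy : ¬ Γ.Adj x y) {L M : List (V × ℤ)}
    (hL : Γ.IsAlt x y L) (hL0 : L ≠ []) (hM : Γ.IsAlt y x M) : Γ.ev L ≠ Γ.ev M := by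
  obtain ⟨c₁, h₁⟩ := Γ.exists_bound_vertex x
  obtain ⟨c₂, h₂⟩ := Γ.exists_bound_vertex y
  set c := max c₁ c₂
  have hcx : ∀ k : ℤ, Γ.zeta x ^ k ≠ 1 →
      ‖(Γ.zeta x : ℂ) ^ k‖ + 1 < c * ‖(Γ.zeta x : ℂ) ^ k - 1‖ := fun k hk =>
    (h₁ k hk).trans_le (mul_le_mul_of_nonneg_right (le_max_left _ _) (norm_nonneg _))
  have hcy : ∀ k : ℤ, Γ.zeta y ^ k ≠ 1 →
      ‖(Γ.zeta y : ℂ) ^ k‖ + 1 < c * ‖(Γ.zeta y : ℂ) ^ k - 1‖ := fun k hk =>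
    (h₂ k hk).trans_le (mul_le_mul_of_nonneg_right (le_max_right _ _) (norm_nonneg _))
  obtain ⟨ρ, hρ⟩ := Γ.exists_rep c
  obtain ⟨α, β, e, -, -, hlt⟩ := Γ.pingpong c ρ hρ L x y hcx hcy hne hxy hL
  obtain ⟨β', α', e', -, hle, -⟩ :=
    Γ.pingpong c ρ hρ M y x hcy hcx hne.symm (fun h => hxy (Γ.symm h)) hM
  intro h
  rw [h, add_comm, e'] at e
  have hx := congrFun e x
  have hy := congrFun e y
  simp [hne, hne.symm] at hx hy
  have := hlt hL0
  rw [← hx, ← hy] at this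
  linarith

end Representation

/-! ### Elements all of whose generators are descents -/

section Main

variable {V : Type} (Γ : DyerGraph V)

/-- If every vertex is a left descent of some element, then all vertices are adjacent: for
nonadjacent `x`, `y` that element would have arbitrarily long alternating prefixes. -/
lemma adj_of_descents [Fintype V] (u : Γ.DyerGroup)
    (hu : ∀ t, ∃ k : ℤ, Γ.len (Γ.gen t ^ k * u) < Γ.len u) (x y : V) (hne : x ≠ y) :
    Γ.Adj x y := by
  by_contra hxy
  have key : ∀ n : ℕ, ∀ x y : V, x ≠ y → ¬ Γ.Adj x y → ∃ L M : List (V × ℤ), Γ.IsAlt x y L ∧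
      L.length = n ∧ Γ.ev (L ++ M) = u ∧ (L ++ M).length = Γ.len u := by
    intro n
    induction n with
    | zero =>
      intro x y _ _
      obtain ⟨M, h1, h2⟩ := Γ.exists_reduced u
      exact ⟨[], M, trivial, rfl, h1, h2⟩
    | succ n ih =>
      intro x y hne hxy
      have hyx : ¬ Γ.Adj y x := fun h => hxy (Γ.symm h)
      obtain ⟨L, M, hL, hn, hev, hlen⟩ := ih y x hne.symm hyx
      obtain ⟨k, hk⟩ := hu x
      obtain ⟨b, hb, ⟨i, hi, hdel⟩ | ⟨M', h1, h2⟩⟩ := Γ.prepend_power u x k hk L M hev hlen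
      · refine absurd ?_ (Γ.isAlt_ev_ne hne hxy (L := (x, b) :: L.take (i + 1)) (M := L.take i)
          ⟨rfl, hb, IsAlt.take Γ hL _⟩ (by simp) (IsAlt.take Γ hL _))
        simpa using hdel
      · refine ⟨(x, -b) :: L, M', ⟨rfl, ?_, hL⟩, by simp [hn], h1, h2⟩
        simpa using hb
  obtain ⟨L, M, -, h1, -, h2⟩ := key (Γ.len u + 1) x y hne hxy
  simp at h2
  omega

/-- The syllable word of a list of vertices, all exponents being `1`. -/
def ofVerts (A : List V) : List (V × ℤ) := A.map fun x => (x, 1)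

lemma gen_zpow_cases {x : V} (hx : Γ.f x = 2) (b : ℤ) (hb : Γ.gen x ^ b ≠ 1) :
    Γ.gen x ^ b = Γ.gen x := by
  rcases Int.even_or_odd' b with ⟨k, rfl | rfl⟩
  · exact absurd (by rw [zpow_mul, zpow_two, Γ.gen_sq hx, one_zpow]) hb
  · rw [zpow_add, zpow_mul, zpow_two, Γ.gen_sq hx, one_zpow, one_mul, zpow_one]

/-- If every vertex is a left descent of `u`, then every shortest word in the involutions `V2`
begins a reduced expression of `u`. -/
lemma initial_of_shortest (u : Γ.DyerGroup) (hu : ∀ t, ∃ k : ℤ, Γ.len (Γ.gen t ^ k * u) < Γ.len u)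
    (A : List V) (hA : ∀ a ∈ A, Γ.f a = 2)
    (hmin : ∀ B : List V, (∀ b ∈ B, Γ.f b = 2) → Γ.ev (ofVerts B) = Γ.ev (ofVerts A) →
      A.length ≤ B.length) :
    ∃ M, Γ.ev (ofVerts A ++ M) = u ∧ (ofVerts A ++ M).length = Γ.len u := by
  induction A with
  | nil =>
    obtain ⟨M, h1, h2⟩ := Γ.exists_reduced u
    exact ⟨M, h1, h2⟩
  | cons s A ih =>
    have hs : Γ.f s = 2 := hA s List.mem_cons_self
    have hA' : ∀ a ∈ A, Γ.f a = 2 := fun a ha => hA a (List.mem_cons_of_mem _ ha)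
    obtain ⟨M, hev, hlen⟩ := ih hA' fun B hB he => by
      have := hmin (s :: B) (by simpa [hs] using hB) (by simpa [ofVerts] using he)
      simpa using this
    obtain ⟨k, hk⟩ := hu s
    obtain ⟨b, hb, ⟨i, hi, hdel⟩ | ⟨M', h1, h2⟩⟩ := Γ.prepend_power u s k hk _ M hev hlen
    · rw [Γ.gen_zpow_cases hs b hb] at hdel
      have hd := Γ.ev_delete _ i _ hdel
      have hi' : i < A.length := by simpa [ofVerts] using hi
      have := hmin (A.take i ++ A.drop (i + 1)) (fun a ha => by
        rcases List.mem_append.mp ha with h | h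
        · exact hA' a (List.mem_of_mem_take h)
        · exact hA' a (List.mem_of_mem_drop h)) (by
        simp only [ofVerts, List.map_append, List.map_take, List.map_drop, List.map_cons, ev_cons,
          zpow_one] at hd ⊢
        exact hd.symm)
      simp only [List.length_cons, List.length_append, List.length_take, List.length_drop] at this
      omega
    · refine ⟨M', ?_, by simpa [ofVerts] using h2⟩
      have hb' : Γ.gen s ^ (-b) = Γ.gen s := Γ.gen_zpow_cases hs (-b) (by simpa using hb)
      rw [ev_cons] at h1
      simp only [hb'] at h1
      simpa [ofVerts] using h1

lemma exists_ofVerts (g : Γ.DyerGroup) (hg : g ∈ Γ.parabolic Γ.V2) :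
    ∃ A : List V, (∀ a ∈ A, Γ.f a = 2) ∧ Γ.ev (ofVerts A) = g := by
  induction hg using Subgroup.closure_induction with
  | mem x hx =>
    obtain ⟨v, hv, rfl⟩ := hx
    refine ⟨[v], fun a ha => ?_, by simp [ofVerts]⟩
    rw [List.mem_singleton.mp ha]
    exact hv
  | one => exact ⟨[], by simp, rfl⟩
  | mul a b _ _ ha hb =>
    obtain ⟨A, hA, rfl⟩ := ha
    obtain ⟨B, hB, rfl⟩ := hb
    refine ⟨A ++ B, fun a h => ?_, by simp [ofVerts]⟩
    rcases List.mem_append.mp h with h | h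
    · exact hA a h
    · exact hB a h
  | inv a _ ha =>
    obtain ⟨A, hA, rfl⟩ := ha
    refine ⟨A.reverse, by simpa using hA, ?_⟩
    clear * - hA
    induction A with
    | nil => simp [ofVerts]
    | cons s A ih =>
      have hs : (Γ.gen s)⁻¹ = Γ.gen s := inv_eq_of_mul_eq_one_left (Γ.gen_sq (hA s (by simp)))
      have := ih fun a ha => hA a (List.mem_cons_of_mem _ ha)
      simp only [ofVerts, List.reverse_cons, List.map_append, List.map_cons, List.map_nil, ev_append,
        ev_cons, zpow_one, ev_nil, mul_one, mul_inv_rev, hs] at this ⊢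
      rw [this]

lemma finite_of_descents [Fintype V] (u : Γ.DyerGroup)
    (hu : ∀ t, ∃ k : ℤ, Γ.len (Γ.gen t ^ k * u) < Γ.len u) :
    (Γ.parabolic Γ.V2 : Set Γ.DyerGroup).Finite := by
  refine ((List.finite_length_le V (Γ.len u)).image fun A => Γ.ev (ofVerts A)).subset ?_
  intro g hg
  obtain ⟨A, ⟨hA, rfl⟩, hmin⟩ := (measure (List.length (α := V))).wf.has_min
    {A | (∀ a ∈ A, Γ.f a = 2) ∧ Γ.ev (ofVerts A) = g} (Γ.exists_ofVerts g hg)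
  obtain ⟨M, -, hlen⟩ := Γ.initial_of_shortest u hu A hA fun B hB he => not_lt.mp (hmin B ⟨hB, he⟩)
  refine ⟨A, ?_, rfl⟩
  simp only [ofVerts, List.length_append, List.length_map] at hlen
  simp only [Set.mem_ofPred_eq]
  omega

/-- In spherical type the vertices outside `V2` are central, so each contributes at most one
syllable and the syllable length is bounded. -/
lemma exists_len_bound [Fintype V] (h : Γ.Spherical) : ∃ B, ∀ g : Γ.DyerGroup, Γ.len g ≤ B := by
  obtain ⟨hcomp, hfin⟩ := h
  obtain ⟨B, hB⟩ := (hfin.image Γ.len).bddAbove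
  have hcomm : ∀ x, Γ.f x ≠ 2 → ∀ g, g * Γ.gen x = Γ.gen x * g := by
    intro x hx g
    have : g ∈ Subgroup.centralizer {Γ.gen x} := by
      refine PresentedGroup.generated_by Γ.rels _ (fun y => ?_) g
      rw [Subgroup.mem_centralizer_singleton_iff]
      by_cases hxy : y = x
      · rw [hxy]; rfl
      · have hadj := hcomp y x hxy
        have hm : Γ.m y x = 2 := by
          by_contra hm
          exact hx (Γ.compat hadj hm).2
        exact Γ.gen_comm hadj hm
    exact Subgroup.mem_centralizer_singleton_iff.mp this
  have key : ∀ S : Finset V, ∀ g ∈ Γ.parabolic (Γ.V2 ∪ S), Γ.len g ≤ B + S.card := by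
    intro S
    induction S using Finset.induction_on with
    | empty =>
      intro g hg
      simp only [Finset.coe_empty, Set.union_empty] at hg
      exact hB ⟨g, hg, rfl⟩
    | insert x S hxS ih =>
      intro g hg
      rw [Finset.card_insert_of_notMem hxS]
      by_cases hx : Γ.f x = 2
      · have : Γ.V2 ∪ ((insert x S : Finset V) : Set V) = Γ.V2 ∪ S := by
          ext y
          simp only [Finset.coe_insert, Set.mem_union, Set.mem_insert_iff]
          constructor
          · rintro (h | rfl | h)
            · exact Or.inl h
            · exact Or.inl hx
            · exact Or.inr h
          · tauto
        rw [this] at hg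
        exact (ih g hg).trans (by omega)
      · have hsup : Γ.parabolic (Γ.V2 ∪ ((insert x S : Finset V) : Set V)) =
            Subgroup.zpowers (Γ.gen x) ⊔ Γ.parabolic (Γ.V2 ∪ S) := by
          rw [parabolic, parabolic, Subgroup.zpowers_eq_closure, ← Subgroup.closure_union]
          congr 1
          ext y
          simp only [Finset.coe_insert, Set.image_union, Set.image_insert_eq, Set.mem_union,
            Set.mem_insert_iff, Set.mem_singleton_iff]
          tauto
        have hnormal : (Subgroup.zpowers (Γ.gen x)).Normal := by
          refine ⟨?_⟩
          rintro _ ⟨k, rfl⟩ g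
          refine ⟨k, ?_⟩
          have : Commute g (Γ.gen x) := hcomm x hx g
          simp only
          rw [(this.zpow_right k).eq, mul_inv_cancel_right]
        rw [hsup, Subgroup.mem_sup_of_normal_left] at hg
        obtain ⟨_, ⟨k, rfl⟩, b, hb, rfl⟩ := hg
        have h1 := Γ.len_mul_le (Γ.gen x ^ k) b
        have h2 := Γ.len_zpow_le x k
        have h3 := ih b hb
        simp only at h1 ⊢
        omega
  refine ⟨B + (Finset.univ : Finset V).card, fun g => key Finset.univ g ?_⟩
  have := PresentedGroup.closure_range_of Γ.rels
  change Subgroup.closure (Set.range Γ.gen) = ⊤ at this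
  simp [parabolic, this]

/-- Every generator is a left descent of an element of maximal syllable length. -/
lemma descents_of_max (u : Γ.DyerGroup) (hmax : ∀ g, Γ.len g ≤ Γ.len u) (t : V) :
    ∃ k : ℤ, Γ.len (Γ.gen t ^ k * u) < Γ.len u := by
  by_cases h : Γ.coc u (Γ.wall t) = 1
  · have h1 : Γ.coc (Γ.gen t * u) (Γ.wall t) ≠ 1 := by
      have hw : MulAut.conj (Γ.gen t)⁻¹ • Γ.wall t = Γ.wall t := by simpa using Γ.conj_wall t (-1)
      rw [coc_mul, coc_gen, Pi.mulSingle_eq_same, hw, h, mul_one]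
      exact Γ.zeta_ne_one t
    obtain ⟨b, hb⟩ := Γ.exists_len_lt _ t h1
    rw [← mul_assoc, ← zpow_add_one] at hb
    exact ⟨b + 1, hb.trans_le (hmax _)⟩
  · exact Γ.exists_len_lt u t h

lemma mem_Bmin_empty_iff (g : Γ.DyerGroup) :
    g ∈ Γ.Bmin ∅ ↔ ∀ t, ∃ k : ℤ, Γ.len (Γ.gen t ^ k * g⁻¹) < Γ.len g⁻¹ := by
  have hinv : ∀ t (k : ℤ), Γ.len (Γ.gen t ^ k * g⁻¹) = Γ.len (g * Γ.gen t ^ (-k)) := by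
    intro t k
    rw [← len_inv]
    simp
  constructor
  · rintro ⟨-, h⟩ t
    have ht : g ∉ Γ.Amin {t} := fun hg => h (by
      simp only [Set.mem_iUnion]
      exact ⟨{t}, by simp, hg⟩)
    simp only [Amin, Set.mem_ofPred_eq, not_forall, not_le, parabolic, Set.image_singleton,
      ← Subgroup.zpowers_eq_closure] at ht
    obtain ⟨_, ⟨k, rfl⟩, hlt⟩ := ht
    refine ⟨-k, ?_⟩
    rw [hinv, len_inv, neg_neg]
    exact hlt
  · intro h
    refine ⟨?_, ?_⟩
    · intro a ha
      have : a = 1 := by simpa [parabolic] using ha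
      simp [this]
    · simp only [Set.mem_iUnion, not_exists]
      intro Y hY hg
      obtain ⟨t, ht⟩ := Set.empty_ssubset.mp hY
      obtain ⟨k, hk⟩ := h t
      rw [hinv, len_inv] at hk
      have hmem : Γ.gen t ^ (-k) ∈ Γ.parabolic Y :=
        Subgroup.zpow_mem _ (Subgroup.subset_closure (Set.mem_image_of_mem Γ.gen ht)) _
      exact absurd (hg _ hmem) (not_le.mpr hk)

end Main
end DyerGraph

/-- `B_∅ ≠ ∅` if and only if `D` is of spherical type. -/
theorem Bmin_empty_nonempty_iff_spherical
    {V : Type} [Fintype V] (Γ : DyerGraph V) :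
    (Γ.Bmin (∅ : Set V)).Nonempty ↔ Γ.Spherical := by
  constructor
  · rintro ⟨g, hg⟩
    have hd := (Γ.mem_Bmin_empty_iff g).mp hg
    exact ⟨fun x y => Γ.adj_of_descents g⁻¹ hd x y, Γ.finite_of_descents g⁻¹ hd⟩
  · intro h
    obtain ⟨B, hB⟩ := Γ.exists_len_bound h
    have hfin : (Set.range Γ.len).Finite :=
      (Set.finite_Iic B).subset (by rintro _ ⟨g, rfl⟩; exact hB g)
    obtain ⟨_, ⟨u, rfl⟩, hu⟩ := hfin.exists_maximal (Set.range_nonempty _)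
    have hmax : ∀ g, Γ.len g ≤ Γ.len u := fun g => by
      by_contra hlt
      exact hlt (hu ⟨g, rfl⟩ (not_le.mp hlt).le)
    refine ⟨u⁻¹, (Γ.mem_Bmin_empty_iff _).mpr fun t => ?_⟩
    simpa using Γ.descents_of_max u hmax t
end
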